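/- arXiv:1701.07084 — 2 statements merged into one kernel-verified Lean document; each statement's English description precedes it below -/
import Mathlib

section
/- Let X be an infinite-dimensional Banach space (over ℝ or ℂ) and p ∈ [1,2]. Suppose X has type p with constant K (that is, 𝔼‖Σ_{i=1}^n ε_i x_i‖ ≤ K (Σ_{i=1}^n ‖x_i‖^p)^{1/p} for all finite sequences x₁, …, xₙ ∈ X), and suppose that for every q with p < q ≤ 2, X does not have type q (so that the supremum p_X of the types of X equals p). Then for every n ≥ 1 one has n^{1/p} ≤ β_n(X) ≤ K · n^{1/p}. -/
/-- The Rademacher average `𝔼 ‖∑ εᵢ xᵢ‖`: the average over all `2ⁿ` choices of signs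
`εᵢ = ±1` of the norm of `∑ εᵢ xᵢ`. -/
noncomputable def rademacherAvg {X : Type*} [NormedAddCommGroup X]
    (n : ℕ) (x : Fin n → X) : ℝ :=
  ((2 : ℝ) ^ n)⁻¹ * ∑ ε : Fin n → Bool, ‖∑ i, (if ε i then x i else -x i)‖

/-- `β_n(X)`: the supremum of `𝔼 ‖∑_{i=1}^n εᵢ xᵢ‖` over all `x₁, …, xₙ` in the closed
unit ball of `X`. -/
noncomputable def betaN (X : Type*) [NormedAddCommGroup X] (n : ℕ) : ℝ :=
  sSup {r : ℝ | ∃ x : Fin n → X, (∀ i, ‖x i‖ ≤ 1) ∧ r = rademacherAvg n x}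

/-- `X` has (Rademacher) type `p` with constant `K`:
`𝔼 ‖∑ εᵢ xᵢ‖ ≤ K (∑ ‖xᵢ‖^p)^{1/p}` for all finite sequences of vectors. -/
def HasTypeWith (X : Type*) [NormedAddCommGroup X] (p K : ℝ) : Prop :=
  ∀ (n : ℕ) (x : Fin n → X), rademacherAvg n x ≤ K * (∑ i, ‖x i‖ ^ p) ^ (1 / p)

/-!
The upper bound is the type inequality for unit vectors. For the lower bound, the Efron–Stein
inequality shows that `‖∑ εᵢ xᵢ‖` has standard deviation of order at most the weak `ℓ²` norm of
`(xᵢ)`. Hence the norms of block sums are nearly constant, which gives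
`β_{nm} ≤ β_n (β_m + O(n √m))`.

If `β_n < n^{1/p}` for some `n` and `p < 2`, then `β_n < n^t` for some `t ∈ (1/2, 1/p)`, the error
terms are negligible in the iteration, and `β_m = O(m^t)` for all `m`. Decomposing a sequence into
dyadic layers according to the norms of its terms then gives type `q` for every `q < 1/t`, and
`q` can be chosen in `(p, 2]`, a contradiction.

For `p = 2` it remains to show `√n ≤ β_n` in infinite dimension. If `β_n < √n`, iterating the block
estimate along `n^l` normalised copies of a family bounds its Rademacher average by its weak `ℓ²`
norm. But a maximal-determinant argument, as in the Dvoretzky–Rogers lemma, provides arbitrarily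
long families with weak `ℓ²` norm at most `1` and all norms at least `1/4`; repeating these `k`
times yields averages of order `√k`, since among many independent blocks of `k` signs one is
likely to be constant.
-/

open Finset Function
open scoped BigOperators

namespace Rademacher

/-! ### Uniform averages over finite products -/

section Average

variable {ι Ω M : Type*} [Fintype ι] [DecidableEq ι] [Fintype Ω]
  [AddCommMonoid M] [Module ℚ≥0 M]

lemma expect_pi_eval [Nonempty Ω] (i : ι) (g : Ω → M) :
    𝔼 η : ι → Ω, g (η i) = 𝔼 ω, g ω := by
  calc 𝔼 η : ι → Ω, g (η i)
      = 𝔼 z : Ω × ({j // j ≠ i} → Ω), g z.1 :=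
        Fintype.expect_equiv (Equiv.funSplitAt i Ω) _ _ fun _ => rfl
    _ = 𝔼 ω, 𝔼 _η : {j // j ≠ i} → Ω, g ω := by rw [← univ_product_univ, expect_product]
    _ = 𝔼 ω, g ω := expect_congr rfl fun ω _ => Fintype.expect_const (g ω)

lemma expect_fin_cons {m : ℕ} (f : (Fin (m + 1) → Ω) → M) :
    𝔼 η, f η = 𝔼 ω, 𝔼 η : Fin m → Ω, f (Fin.cons ω η) := by
  calc 𝔼 η, f η
      = 𝔼 z : Ω × (Fin m → Ω), f (Fin.cons z.1 z.2) :=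
        (Fintype.expect_equiv (Fin.consEquiv fun _ : Fin (m + 1) => Ω) _ _ fun _ => rfl).symm
    _ = 𝔼 ω, 𝔼 η : Fin m → Ω, f (Fin.cons ω η) := by rw [← univ_product_univ, expect_product]

lemma expect_ite_exists_eq [Nonempty Ω] [DecidableEq Ω] (ω₀ : Ω) :
    𝔼 η : ι → Ω, (if ∃ j, η j = ω₀ then 1 else 0 : ℝ)
      = 1 - (1 - (Fintype.card Ω : ℝ)⁻¹) ^ Fintype.card ι := by
  have hmiss (η : ι → Ω) : (if ∃ j, η j = ω₀ then 1 else 0 : ℝ)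
      = 1 - ∏ j, (1 - if η j = ω₀ then 1 else 0) := by
    split_ifs with h
    · obtain ⟨j, hj⟩ := h
      rw [prod_eq_zero (mem_univ j) (by simp [hj]), sub_zero]
    · push Not at h
      simp [h]
  have hsingle : 𝔼 ω : Ω, (1 - if ω = ω₀ then 1 else 0 : ℝ) = 1 - (Fintype.card Ω : ℝ)⁻¹ := by
    rw [expect_sub_distrib, Fintype.expect_const, Fintype.expect_eq_sum_div_card]
    simp
  simp only [hmiss]
  rw [expect_sub_distrib, Fintype.expect_const, ← hsingle, Fintype.expect_eq_sum_div_card,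
    Fintype.expect_eq_sum_div_card, div_pow, ← card_univ (α := ι), ← prod_const,
    ← Fintype.piFinset_univ, prod_univ_sum]
  simp

end Average

section EfronStein

variable {ι Ω : Type*} [Fintype ι] [Fintype Ω] [Nonempty Ω]

lemma sq_expect_le_expect_sq (f : Ω → ℝ) : (𝔼 ω, f ω) ^ 2 ≤ 𝔼 ω, f ω ^ 2 := by
  simpa using expect_mul_sq_le_sq_mul_sq univ f fun _ => 1

lemma expect_sq_sub_sq_expect (f : Ω → ℝ) :
    𝔼 ω, f ω ^ 2 - (𝔼 ω, f ω) ^ 2 = 1 / 2 * 𝔼 ω, 𝔼 ω', (f ω - f ω') ^ 2 := by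
  simp only [sub_sq, expect_add_distrib, expect_sub_distrib, Fintype.expect_const,
    ← mul_expect, ← expect_mul]
  ring

lemma efron_stein_fin {m : ℕ} (f : (Fin m → Ω) → ℝ) :
    𝔼 η, f η ^ 2 - (𝔼 η, f η) ^ 2 ≤ 1 / 2 * ∑ j, 𝔼 η, 𝔼 ω, (f η - f (update η j ω)) ^ 2 := by
  induction m with
  | zero => simp
  | succ m ih =>
    let g (ω : Ω) : ℝ := 𝔼 η, f (Fin.cons ω η)
    have hfirst : 𝔼 ω, g ω ^ 2 - (𝔼 ω, g ω) ^ 2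
        ≤ 1 / 2 * 𝔼 ω, 𝔼 η, 𝔼 ω', (f (Fin.cons ω η) - f (Fin.cons ω' η)) ^ 2 := by
      rw [expect_sq_sub_sq_expect]
      gcongr with ω
      rw [expect_comm]
      gcongr with ω'
      simpa only [g, expect_sub_distrib] using
        sq_expect_le_expect_sq fun η => f (Fin.cons ω η) - f (Fin.cons ω' η)
    have hrest : 𝔼 ω, (𝔼 η, f (Fin.cons ω η) ^ 2 - g ω ^ 2) ≤
        1 / 2 * ∑ j, 𝔼 ω, 𝔼 η, 𝔼 ω',
          (f (Fin.cons ω η) - f (Fin.cons ω (update η j ω'))) ^ 2 := by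
      rw [← expect_sum_comm, mul_expect]
      gcongr with ω
      exact ih fun η => f (Fin.cons ω η)
    rw [expect_sub_distrib] at hrest
    simp only [expect_fin_cons (m := m), Fin.sum_univ_succ, Fin.update_cons_zero,
      ← Fin.cons_update]
    linarith

lemma efron_stein [DecidableEq ι] (f : (ι → Ω) → ℝ) :
    𝔼 η, f η ^ 2 - (𝔼 η, f η) ^ 2 ≤ 1 / 2 * ∑ j, 𝔼 η, 𝔼 ω, (f η - f (update η j ω)) ^ 2 := by
  let e := Fintype.equivFin ι
  have hreindex (g : (ι → Ω) → ℝ) : 𝔼 η : Fin (Fintype.card ι) → Ω, g (η ∘ e) = 𝔼 η, g η :=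
    Fintype.expect_equiv (e.symm.arrowCongr (Equiv.refl Ω)) _ _ fun _ => rfl
  have h := efron_stein_fin fun η => f (η ∘ e)
  rw [← Equiv.sum_comp e] at h
  have hterm (j : ι) : 𝔼 η : Fin (Fintype.card ι) → Ω,
      𝔼 ω, (f (η ∘ e) - f (update (η ∘ e) j ω)) ^ 2 = 𝔼 η, 𝔼 ω, (f η - f (update η j ω)) ^ 2 :=
    hreindex fun η => 𝔼 ω, (f η - f (update η j ω)) ^ 2
  simpa only [update_comp_equiv, Equiv.symm_apply_apply, hreindex (f · ^ 2), hreindex f,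
    hterm] using h

lemma efron_stein_posPart [DecidableEq ι] (f : (ι → Ω) → ℝ) :
    𝔼 η, f η ^ 2 - (𝔼 η, f η) ^ 2 ≤ ∑ j, 𝔼 η, 𝔼 ω, ((f η - f (update η j ω))⁺) ^ 2 := by
  refine (efron_stein f).trans_eq ?_
  rw [mul_sum]
  refine sum_congr rfl fun j _ => ?_
  have hswap : 𝔼 η, 𝔼 ω, ((f (update η j ω) - f η)⁺) ^ 2
      = 𝔼 η, 𝔼 ω, ((f η - f (update η j ω))⁺) ^ 2 := by
    let swap (z : (ι → Ω) × Ω) : (ι → Ω) × Ω := (update z.1 j z.2, z.1 j)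
    have hinv : Involutive swap := fun z => by simp [swap]
    rw [← expect_product', ← expect_product', univ_product_univ]
    exact Fintype.expect_bijective swap hinv.bijective _ _ fun z => by simp [swap]
  have hsq (a b : ℝ) : (a - b) ^ 2 = ((a - b)⁺) ^ 2 + ((b - a)⁺) ^ 2 := by
    rcases le_total a b with h | h
    · rw [posPart_of_nonpos (sub_nonpos.2 h), posPart_of_nonneg (sub_nonneg.2 h)]; ring
    · rw [posPart_of_nonneg (sub_nonneg.2 h), posPart_of_nonpos (sub_nonpos.2 h)]; ring
  simp only [hsq, expect_add_distrib, hswap]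
  ring

end EfronStein

/-! ### Signed sums and their mean norm -/

section SignedSum

variable {ι κ X : Type*} [Fintype ι] [Fintype κ]

/-- The signed sum `∑ εᵢ xᵢ`. Signs are units of `ℤ`, so that the sign vectors form a group. -/
def signedSum [AddCommGroup X] (x : ι → X) (ε : ι → ℤˣ) : X := ∑ i, ε i • x i

section Algebra

variable [AddCommGroup X]

lemma signedSum_comp_equiv (e : ι ≃ κ) (x : κ → X) (ε : κ → ℤˣ) :
    signedSum (x ∘ e) (ε ∘ e) = signedSum x ε :=
  Equiv.sum_comp e fun i => ε i • x i

lemma signedSum_sumElim (x : ι → X) (y : κ → X) (ε : ι ⊕ κ → ℤˣ) :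
    signedSum (Sum.elim x y) ε = signedSum x (ε ∘ Sum.inl) + signedSum y (ε ∘ Sum.inr) := by
  simp [signedSum]

lemma signedSum_mul (δ : ι → ℤˣ) (x : ι → X) (ε : ι → ℤˣ) :
    signedSum x (δ * ε) = signedSum (fun i => δ i • x i) ε := by
  simp only [signedSum, Pi.mul_apply, smul_smul, mul_comm]

lemma signedSum_smul [Module ℝ X] (c : ℝ) (x : ι → X) (ε : ι → ℤˣ) :
    signedSum (fun i => c • x i) ε = c • signedSum x ε := by
  simp only [signedSum, smul_sum, smul_comm c]

lemma signedSum_sum {J : Type*} (s : Finset J) (x : J → ι → X) (ε : ι → ℤˣ) :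
    signedSum (fun i => ∑ k ∈ s, x k i) ε = ∑ k ∈ s, signedSum (x k) ε := by
  simp only [signedSum, smul_sum]
  exact sum_comm

lemma signedSum_sub_signedSum_update [DecidableEq ι] (x : ι → X) (ε : ι → ℤˣ) (j : ι) (u : ℤˣ) :
    signedSum x ε - signedSum x (update ε j u) = ε j • x j - u • x j := by
  rw [signedSum, signedSum, ← sum_sub_distrib, sum_eq_single j]
  · rw [update_self]
  · intro i _ hij
    rw [update_of_ne hij, sub_self]
  · simp

lemma signedSum_prod (x : ι → κ → X) (δ : ι → ℤˣ) (η : ι → κ → ℤˣ) :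
    signedSum (fun z : ι × κ => δ z.1 • x z.1 z.2) (fun z => η z.1 z.2)
      = signedSum (fun i => signedSum (x i) (η i)) δ := by
  simp only [signedSum, Fintype.sum_prod_type, smul_sum]
  exact sum_congr rfl fun i _ => sum_congr rfl fun j _ => smul_comm _ _ _

end Algebra

variable [NormedAddCommGroup X]

lemma norm_signedSum_le (x : ι → X) (ε : ι → ℤˣ) : ‖signedSum x ε‖ ≤ ∑ i, ‖x i‖ := by
  simpa only [signedSum, norm_units_zsmul] using norm_sum_le univ fun i => ε i • x i

variable [DecidableEq ι] [DecidableEq κ]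

/-- The Rademacher average `𝔼 ‖∑ εᵢ xᵢ‖` of a family indexed by an arbitrary finite type, which
gives access to families over products, disjoint sums and subtypes. -/
noncomputable def radMean (x : ι → X) : ℝ := 𝔼 ε : ι → ℤˣ, ‖signedSum x ε‖

lemma rademacherAvg_eq_radMean {n : ℕ} (x : Fin n → X) : rademacherAvg n x = radMean x := by
  let toSign : Bool ≃ ℤˣ := Equiv.ofBijective (fun b => if b then 1 else -1) (by decide)
  have hsign (ε : Fin n → Bool) :
      signedSum x (toSign ∘ ε) = ∑ i, (if ε i then x i else -x i) :=
    sum_congr rfl fun i _ => by cases h : ε i <;> simp [toSign, h]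
  calc rademacherAvg n x
      = 𝔼 ε : Fin n → Bool, ‖signedSum x (toSign ∘ ε)‖ := by
        simp [rademacherAvg, hsign, Fintype.expect_eq_sum_div_card, div_eq_inv_mul]
    _ = radMean x := Fintype.expect_equiv ((Equiv.refl _).arrowCongr toSign) _ _ fun _ => rfl

lemma radMean_nonneg (x : ι → X) : 0 ≤ radMean x := expect_nonneg fun _ _ => norm_nonneg _

lemma radMean_le_sum_norm (x : ι → X) : radMean x ≤ ∑ i, ‖x i‖ :=
  expect_le univ_nonempty fun ε _ => norm_signedSum_le x ε

lemma radMean_comp_equiv (e : ι ≃ κ) (x : κ → X) : radMean (x ∘ e) = radMean x :=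
  (Fintype.expect_equiv (e.arrowCongr (Equiv.refl ℤˣ)).symm _ _ fun ε =>
    congrArg norm (signedSum_comp_equiv e x ε).symm).symm

lemma radMean_units_smul (δ : ι → ℤˣ) (x : ι → X) :
    radMean (fun i => δ i • x i) = radMean x :=
  Fintype.expect_equiv (Equiv.mulLeft δ) _ _ fun ε => by
    rw [Equiv.coe_mulLeft, signedSum_mul]

lemma radMean_sumElim_zero (x : ι → X) : radMean (Sum.elim x (0 : κ → X)) = radMean x := by
  calc radMean (Sum.elim x (0 : κ → X))
      = 𝔼 z : (ι → ℤˣ) × (κ → ℤˣ), ‖signedSum x z.1‖ :=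
        Fintype.expect_equiv (Equiv.sumArrowEquivProdArrow ι κ ℤˣ) _ _ fun ε => by
          rw [signedSum_sumElim]
          simp [signedSum, Equiv.sumArrowEquivProdArrow]
    _ = 𝔼 ε, 𝔼 _η : κ → ℤˣ, ‖signedSum x ε‖ := by rw [← univ_product_univ, expect_product]
    _ = radMean x := expect_congr rfl fun _ _ => Fintype.expect_const _

lemma radMean_restrict (s : Finset ι) (x : ι → X) (hx : ∀ i ∉ s, x i = 0) :
    radMean x = radMean fun i : s => x i := by
  have hsplit : x ∘ Equiv.sumCompl (· ∈ s) = Sum.elim (fun i : s => x i) 0 := by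
    ext (i | i)
    · rfl
    · exact hx i i.2
  rw [← radMean_comp_equiv (Equiv.sumCompl (· ∈ s)), hsplit, radMean_sumElim_zero]

/-- Decoupling: by sign invariance, each block of signs may be multiplied by an independent
common sign. -/
lemma radMean_prod (x : ι → κ → X) :
    radMean (fun z : ι × κ => x z.1 z.2)
      = 𝔼 η : ι → κ → ℤˣ, radMean fun i => signedSum (x i) (η i) := by
  have hfixed (δ : ι → ℤˣ) : radMean (fun z : ι × κ => x z.1 z.2)
      = 𝔼 η : ι → κ → ℤˣ, ‖signedSum (fun i => signedSum (x i) (η i)) δ‖ := by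
    rw [← radMean_units_smul fun z : ι × κ => δ z.1]
    exact Fintype.expect_equiv (Equiv.curry ι κ ℤˣ) _ _ fun ε =>
      congrArg norm (signedSum_prod x δ fun i j => ε (i, j))
  calc radMean (fun z : ι × κ => x z.1 z.2)
      = 𝔼 _δ : ι → ℤˣ, radMean (fun z : ι × κ => x z.1 z.2) := (Fintype.expect_const _).symm
    _ = 𝔼 δ : ι → ℤˣ, 𝔼 η : ι → κ → ℤˣ, ‖signedSum (fun i => signedSum (x i) (η i)) δ‖ :=
        expect_congr rfl fun δ _ => hfixed δ
    _ = 𝔼 η : ι → κ → ℤˣ, radMean fun i => signedSum (x i) (η i) := expect_comm _ _ _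

lemma radMean_sum_le {J : Type*} (s : Finset J) (x : J → ι → X) :
    radMean (fun i => ∑ k ∈ s, x k i) ≤ ∑ k ∈ s, radMean (x k) := by
  simp only [radMean, signedSum_sum, ← expect_sum_comm]
  exact expect_le_expect fun ε _ => norm_sum_le _ _

section Real

variable [NormedSpace ℝ X]

lemma radMean_smul (c : ℝ) (x : ι → X) : radMean (fun i => c • x i) = |c| * radMean x := by
  simp only [radMean, signedSum_smul, norm_smul, Real.norm_eq_abs, mul_expect]

lemma radMean_abs_smul (s : ι → ℝ) (x : ι → X) :
    radMean (fun i => |s i| • x i) = radMean fun i => s i • x i := by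
  rw [← radMean_units_smul (fun i => if 0 ≤ s i then 1 else -1) fun i => s i • x i]
  congr 1 with i
  split_ifs with h
  · rw [abs_of_nonneg h, one_smul]
  · rw [abs_of_neg (not_le.1 h), neg_smul, Units.neg_smul, one_smul]

/-- Averaging over the sign `εⱼ` alone can only decrease the norm. -/
lemma norm_le_radMean (x : ι → X) (j : ι) : ‖x j‖ ≤ radMean x := by
  have hflip : 𝔼 ε : ι → ℤˣ, ‖signedSum x (update ε j (-ε j))‖ = radMean x :=
    Fintype.expect_bijective (fun ε => update ε j (-ε j))
      (Involutive.bijective fun ε => by simp) _ _ fun _ => rfl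
  have hpair (ε : ι → ℤˣ) :
      2 * ‖x j‖ ≤ ‖signedSum x ε‖ + ‖signedSum x (update ε j (-ε j))‖ := by
    calc 2 * ‖x j‖ = ‖signedSum x ε - signedSum x (update ε j (-ε j))‖ := by
          rw [signedSum_sub_signedSum_update, Units.neg_smul, sub_neg_eq_add, ← smul_add,
            norm_units_zsmul, ← two_smul ℝ, norm_smul, Real.norm_two]
      _ ≤ _ := norm_sub_le _ _
  have hmean := le_expect (univ_nonempty (α := ι → ℤˣ)) fun ε _ => hpair ε
  rw [expect_add_distrib, hflip] at hmean
  change _ ≤ radMean x + radMean x at hmean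
  linarith

lemma radMean_expect_smul_le {Ω : Type*} [Fintype Ω] (s : Ω → ι → ℝ) (x : ι → X) :
    radMean (fun i => (𝔼 ω, s ω i) • x i) ≤ 𝔼 ω, radMean fun i => s ω i • x i := by
  have hexpand : (fun i => (𝔼 ω, s ω i) • x i)
      = fun i => (Fintype.card Ω : ℝ)⁻¹ • ∑ ω, s ω i • x i := by
    ext i
    rw [Fintype.expect_eq_sum_div_card, div_eq_inv_mul, mul_smul, sum_smul]
  rw [hexpand, radMean_smul, abs_of_nonneg (by positivity), Fintype.expect_eq_sum_div_card,
    div_eq_inv_mul]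
  gcongr
  exact radMean_sum_le _ _

end Real

end SignedSum

section BetaN

variable {ι X : Type*} [Fintype ι] [DecidableEq ι] [NormedAddCommGroup X] {m n : ℕ}

lemma betaN_le {B : ℝ} (h : ∀ x : Fin n → X, (∀ i, ‖x i‖ ≤ 1) → radMean x ≤ B) :
    betaN X n ≤ B := by
  refine csSup_le ⟨_, fun _ => 0, by simp, rfl⟩ ?_
  rintro r ⟨x, hx, rfl⟩
  exact rademacherAvg_eq_radMean x ▸ h x hx

lemma bddAbove_rademacherAvg (X : Type*) [NormedAddCommGroup X] (n : ℕ) :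
    BddAbove {r : ℝ | ∃ x : Fin n → X, (∀ i, ‖x i‖ ≤ 1) ∧ r = rademacherAvg n x} := by
  refine ⟨n, ?_⟩
  rintro r ⟨x, hx, rfl⟩
  calc rademacherAvg n x ≤ ∑ i, ‖x i‖ := rademacherAvg_eq_radMean x ▸ radMean_le_sum_norm x
    _ ≤ ∑ _i : Fin n, 1 := sum_le_sum fun i _ => hx i
    _ = n := by simp

lemma radMean_le_betaN (hn : Fintype.card ι ≤ n) (x : ι → X) (hx : ∀ i, ‖x i‖ ≤ 1) :
    radMean x ≤ betaN X n := by
  let e : ι ⊕ Fin (n - Fintype.card ι) ≃ Fin n := Fintype.equivFinOfCardEq (by simp [hn])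
  let y : Fin n → X := Sum.elim x 0 ∘ e.symm
  have hy (j : Fin n) : ‖y j‖ ≤ 1 := by
    rcases h : e.symm j with i | i <;> simp [y, h, hx]
  have hxy : radMean x = rademacherAvg n y := by
    rw [rademacherAvg_eq_radMean, radMean_comp_equiv, radMean_sumElim_zero]
  exact le_csSup (bddAbove_rademacherAvg X n) ⟨y, hy, hxy⟩

lemma betaN_nonneg (X : Type*) [NormedAddCommGroup X] (n : ℕ) : 0 ≤ betaN X n :=
  (radMean_nonneg _).trans (radMean_le_betaN (ι := Fin n) (by simp) (fun _ => (0 : X)) (by simp))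

lemma betaN_mono (h : m ≤ n) : betaN X m ≤ betaN X n :=
  betaN_le fun x hx => radMean_le_betaN (by simpa using h) x hx

lemma betaN_zero : betaN X 0 = 0 :=
  (betaN_le fun x _ => (radMean_le_sum_norm x).trans (by simp)).antisymm (betaN_nonneg X 0)

lemma radMean_le_betaN_mul [NormedSpace ℝ X] (hn : Fintype.card ι ≤ n) (x : ι → X) {R : ℝ}
    (hR : 0 ≤ R) (hx : ∀ i, ‖x i‖ ≤ R) : radMean x ≤ betaN X n * R := by
  rcases hR.eq_or_lt with rfl | hR
  · rw [mul_zero]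
    exact (radMean_le_sum_norm x).trans (sum_nonpos fun i _ => hx i)
  · have hunit (i : ι) : ‖R⁻¹ • x i‖ ≤ 1 := by
      rw [norm_smul, norm_inv, Real.norm_of_nonneg hR.le, inv_mul_le_iff₀ hR, mul_one]
      exact hx i
    have hβ := radMean_le_betaN hn (fun i => R⁻¹ • x i) hunit
    rwa [radMean_smul, abs_of_pos (inv_pos.2 hR), inv_mul_le_iff₀ hR, mul_comm] at hβ

end BetaN
/-! ### Concentration of signed sums -/

lemma expect_units_int (g : ℤˣ → ℝ) : 𝔼 u, g u = (g 1 + g (-1)) / 2 := by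
  rw [Fintype.expect_eq_sum_div_card, UnitsInt.univ, sum_pair (by decide),
    Fintype.card_units_int, Nat.cast_two]

section Concentration

variable {ι κ X : Type*} [Fintype ι] [Fintype κ] [NormedAddCommGroup X] [NormedSpace ℝ X]

/-- The square of the weak `ℓ²` norm of the finite family `x` is at most `C`. -/
def WeakSqSumLE (x : κ → X) (C : ℝ) : Prop :=
  ∀ φ : StrongDual ℝ X, ‖φ‖ ≤ 1 → ∑ j, φ (x j) ^ 2 ≤ C

lemma weakSqSumLE_card {x : κ → X} (hx : ∀ j, ‖x j‖ ≤ 1) :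
    WeakSqSumLE x (Fintype.card κ) := by
  intro φ hφ
  have hterm (j : κ) : φ (x j) ^ 2 ≤ 1 := by
    rw [sq_le_one_iff_abs_le_one, ← Real.norm_eq_abs]
    exact (φ.le_opNorm _).trans (mul_le_one₀ hφ (norm_nonneg _) (hx j))
  calc ∑ j, φ (x j) ^ 2 ≤ ∑ _j : κ, 1 := sum_le_sum fun j _ => hterm j
    _ = Fintype.card κ := by simp

variable [DecidableEq ι] [DecidableEq κ] {x : κ → X} {C : ℝ}

lemma posPart_norm_sub_norm_le {φ : StrongDual ℝ X} (hφ : ‖φ‖ ≤ 1) {v : X} (hv : φ v = ‖v‖)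
    (w : X) : (‖v‖ - ‖w‖)⁺ ≤ |φ (v - w)| := by
  refine sup_le ?_ (abs_nonneg _)
  have hw : φ w ≤ ‖w‖ := (le_abs_self _).trans (φ.le_of_opNorm_le hφ w |>.trans_eq (one_mul _))
  rw [map_sub, hv]
  exact (sub_le_sub_left hw _).trans (le_abs_self _)

/-- A functional norming the signed sum controls all the one-sided increments at once. -/
lemma WeakSqSumLE.expect_norm_sq_sub_le (h : WeakSqSumLE x C) :
    𝔼 ε : κ → ℤˣ, ‖signedSum x ε‖ ^ 2 - radMean x ^ 2 ≤ 2 * C := by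
  refine (efron_stein_posPart fun ε => ‖signedSum x ε‖).trans ?_
  rw [← expect_sum_comm]
  refine expect_le univ_nonempty fun ε _ => ?_
  obtain ⟨φ, hφ, hnorm⟩ := exists_dual_vector'' ℝ (signedSum x ε)
  have hflip (j : κ) : 𝔼 u : ℤˣ, φ (ε j • x j - u • x j) ^ 2 = 2 * φ (x j) ^ 2 := by
    rw [expect_units_int]
    rcases Int.units_eq_one_or (ε j) with hj | hj <;> simp [hj] <;> ring
  calc ∑ j, 𝔼 u : ℤˣ, ((‖signedSum x ε‖ - ‖signedSum x (update ε j u)‖)⁺) ^ 2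
      ≤ ∑ j, 𝔼 u : ℤˣ, φ (ε j • x j - u • x j) ^ 2 := by
        refine sum_le_sum fun j _ => expect_le_expect fun u _ => ?_
        rw [← signedSum_sub_signedSum_update, ← sq_abs (φ _)]
        gcongr
        exact posPart_norm_sub_norm_le hφ hnorm _
    _ = 2 * ∑ j, φ (x j) ^ 2 := by simp only [hflip, mul_sum]
    _ ≤ 2 * C := by gcongr; exact h φ hφ

lemma WeakSqSumLE.expect_abs_norm_sub_le (h : WeakSqSumLE x C) :
    𝔼 ε : κ → ℤˣ, |‖signedSum x ε‖ - radMean x| ≤ √(2 * C) := by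
  refine Real.le_sqrt_of_sq_le ((sq_expect_le_expect_sq _).trans ?_)
  refine h.expect_norm_sq_sub_le.trans' (le_of_eq ?_)
  simp only [sq_abs, sub_sq, expect_add_distrib, expect_sub_distrib, Fintype.expect_const,
    ← mul_expect, ← expect_mul]
  rw [← radMean]
  ring

/-- Since the norms of the block sums concentrate around their means, the blocks behave as if they
had norm at most `A`. -/
lemma radMean_prod_le {x : ι → κ → X} {A : ℝ} (hA : 0 ≤ A) (hmean : ∀ i, radMean (x i) ≤ A)
    (hweak : ∀ i, WeakSqSumLE (x i) C) :
    radMean (fun z : ι × κ => x z.1 z.2)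
      ≤ betaN X (Fintype.card ι) * (A + Fintype.card ι * √(2 * C)) := by
  let dev (i : ι) (ε : κ → ℤˣ) : ℝ := |‖signedSum (x i) ε‖ - radMean (x i)|
  have hblock (η : ι → κ → ℤˣ) : radMean (fun i => signedSum (x i) (η i))
      ≤ betaN X (Fintype.card ι) * (A + ∑ i, dev i (η i)) := by
    have hdev (i : ι) : 0 ≤ dev i (η i) := abs_nonneg _
    refine radMean_le_betaN_mul le_rfl _ (add_nonneg hA (sum_nonneg fun i _ => hdev i)) fun i => ?_
    calc ‖signedSum (x i) (η i)‖ ≤ radMean (x i) + dev i (η i) := by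
          linarith [le_abs_self (‖signedSum (x i) (η i)‖ - radMean (x i))]
      _ ≤ A + ∑ i, dev i (η i) := by
          gcongr
          · exact hmean i
          · exact single_le_sum (f := fun i => dev i (η i)) (fun i _ => hdev i) (mem_univ i)
  calc radMean (fun z : ι × κ => x z.1 z.2)
      = 𝔼 η : ι → κ → ℤˣ, radMean fun i => signedSum (x i) (η i) := radMean_prod x
    _ ≤ 𝔼 η : ι → κ → ℤˣ, betaN X (Fintype.card ι) * (A + ∑ i, dev i (η i)) := by
        gcongr with η
        exact hblock η
    _ = betaN X (Fintype.card ι) * (A + ∑ i, 𝔼 ε, dev i ε) := by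
        rw [← mul_expect, expect_add_distrib, Fintype.expect_const, expect_sum_comm]
        simp only [expect_pi_eval]
    _ ≤ betaN X (Fintype.card ι) * (A + ∑ _i : ι, √(2 * C)) := by
        have := betaN_nonneg X (Fintype.card ι)
        gcongr with i
        exact (hweak i).expect_abs_norm_sub_le
    _ = betaN X (Fintype.card ι) * (A + Fintype.card ι * √(2 * C)) := by simp

end Concentration
/-! ### Power growth of `betaN` and type -/

section Dyadic

variable {X : Type*} [NormedAddCommGroup X]

/-- The `l`-th dyadic layer: `v` itself if `2^{-(l+1)} < ‖v‖ ≤ 2^{-l}`, and `0` otherwise. -/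
noncomputable def dyadicLayer (l : ℕ) (v : X) : X :=
  if (1 / 2) ^ (l + 1) < ‖v‖ ∧ ‖v‖ ≤ (1 / 2) ^ l then v else 0

lemma sum_dyadicLayer {v : X} (hv : ‖v‖ ≤ 1) (N : ℕ) :
    ∑ l ∈ range N, dyadicLayer l v = if (1 / 2) ^ N < ‖v‖ then v else 0 := by
  induction N with
  | zero => simp [hv]
  | succ N ih =>
    have hmono : (1 / 2 : ℝ) ^ (N + 1) ≤ (1 / 2) ^ N := by
      rw [pow_succ]
      linarith [pow_pos (one_half_pos (α := ℝ)) N]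
    rw [sum_range_succ, ih, dyadicLayer]
    by_cases hN : (1 / 2) ^ N < ‖v‖
    · rw [if_pos hN, if_neg fun h => hN.not_ge h.2, if_pos (hmono.trans_lt hN), add_zero]
    · simp only [if_neg hN, not_lt.1 hN, and_true, zero_add]

lemma card_lt_norm_mul_rpow_le {ι : Type*} [Fintype ι] (y : ι → X) {a q : ℝ}
    (ha : 0 ≤ a) (hq : 0 ≤ q) :
    #{i | a < ‖y i‖} * a ^ q ≤ ∑ i, ‖y i‖ ^ q := by
  calc #{i | a < ‖y i‖} * a ^ q = ∑ i with a < ‖y i‖, a ^ q := by simp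
    _ ≤ ∑ i with a < ‖y i‖, ‖y i‖ ^ q := by
        gcongr with i hi
        exact (mem_filter.1 hi).2.le
    _ ≤ ∑ i, ‖y i‖ ^ q :=
        sum_le_sum_of_subset_of_nonneg (filter_subset _ _) fun _ _ _ => by positivity

end Dyadic

section Growth

variable {X : Type*} [NormedAddCommGroup X] [NormedSpace ℝ X]

lemma betaN_mul_le (X : Type*) [NormedAddCommGroup X] [NormedSpace ℝ X] (n m : ℕ) :
    betaN X (n * m) ≤ betaN X n * (betaN X m + n * √(2 * m)) := by
  refine betaN_le fun x hx => ?_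
  rw [← radMean_comp_equiv finProdFinEquiv]
  have h := radMean_prod_le (x := fun i j => x (finProdFinEquiv (i, j))) (betaN_nonneg X m)
    (fun i => radMean_le_betaN (by simp) _ fun j => hx _) fun i => weakSqSumLE_card fun j => hx _
  rwa [Fintype.card_fin, Fintype.card_fin] at h

lemma betaN_pow_le {n : ℕ} (hn : 1 ≤ n) {t : ℝ} (ht : 1 / 2 ≤ t)
    (h : betaN X n < (n : ℝ) ^ t) :
    ∃ D : ℝ, 0 ≤ D ∧ ∀ k : ℕ, betaN X (n ^ k) ≤ D * ((n : ℝ) ^ t) ^ k := by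
  set a : ℝ := (n : ℝ) ^ t
  have hβ := betaN_nonneg X n
  have hsqrt : √n ≤ a := by
    rw [Real.sqrt_eq_rpow]
    exact Real.rpow_le_rpow_of_exponent_le (by exact_mod_cast hn) ht
  let D : ℝ := max (betaN X 1) (betaN X n * (n * √2) / (a - betaN X n))
  have hstep : betaN X n * (D + n * √2) ≤ D * a := by
    have hD := (div_le_iff₀ (sub_pos.2 h)).1
      (le_max_right (betaN X 1) (betaN X n * (n * √2) / (a - betaN X n)))
    change _ ≤ D * _ at hD
    linarith
  refine ⟨D, (betaN_nonneg X 1).trans (le_max_left _ _), fun k => ?_⟩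
  induction k with
  | zero => simp [D]
  | succ k ih =>
    calc betaN X (n ^ (k + 1))
        ≤ betaN X n * (betaN X (n ^ k) + n * √(2 * (n ^ k : ℕ))) :=
          pow_succ' n k ▸ betaN_mul_le X n (n ^ k)
      _ = betaN X n * (betaN X (n ^ k) + n * (√2 * √n ^ k)) := by
          rw [Real.sqrt_mul zero_le_two, Nat.cast_pow, Real.sqrt_eq_rpow (_ ^ k),
            ← Real.rpow_pow_comm (Nat.cast_nonneg n), ← Real.sqrt_eq_rpow]
      _ ≤ betaN X n * (D * a ^ k + n * (√2 * a ^ k)) := by gcongr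
      _ = betaN X n * (D + n * √2) * a ^ k := by ring
      _ ≤ D * a * a ^ k := by gcongr
      _ = D * a ^ (k + 1) := by ring

lemma exists_betaN_le_rpow {n : ℕ} (hn : 2 ≤ n) {t : ℝ} (ht : 1 / 2 ≤ t)
    (h : betaN X n < (n : ℝ) ^ t) :
    ∃ D : ℝ, 0 ≤ D ∧ ∀ m : ℕ, betaN X m ≤ D * (m : ℝ) ^ t := by
  obtain ⟨D, hD, hpow⟩ := betaN_pow_le (by omega) ht h
  refine ⟨D * (n : ℝ) ^ t, by positivity, fun m => ?_⟩
  rcases Nat.eq_zero_or_pos m with rfl | hm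
  · rw [Nat.cast_zero, Real.zero_rpow (by linarith), mul_zero, betaN_zero]
  calc betaN X m
      ≤ betaN X (n ^ (Nat.log n m + 1)) := betaN_mono (Nat.lt_pow_succ_log_self hn m).le
    _ ≤ D * ((n : ℝ) ^ t) ^ (Nat.log n m + 1) := hpow _
    _ = D * (n : ℝ) ^ t * ((n ^ Nat.log n m : ℕ) : ℝ) ^ t := by
        rw [Nat.cast_pow, ← Real.rpow_pow_comm (Nat.cast_nonneg n), pow_succ']
        ring
    _ ≤ D * (n : ℝ) ^ t * (m : ℝ) ^ t := by
        gcongr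
        exact Nat.pow_log_le_self n hm.ne'

variable {ι : Type*} [Fintype ι] [DecidableEq ι] {D t q : ℝ}

lemma radMean_dyadicLayer_le (hD : 0 ≤ D) (hq : 0 ≤ q) (ht : 0 ≤ t)
    (hβ : ∀ m : ℕ, betaN X m ≤ D * (m : ℝ) ^ t) {y : ι → X} (hy : ∑ i, ‖y i‖ ^ q ≤ 1) (l : ℕ) :
    radMean (fun i => dyadicLayer l (y i)) ≤ D * 2 ^ (q * t) * (2 ^ (q * t - 1)) ^ l := by
  let s : Finset ι := {i | (1 / 2) ^ (l + 1) < ‖y i‖}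
  have hsupp (i : ι) (hi : i ∉ s) : dyadicLayer l (y i) = 0 :=
    if_neg fun h => hi (by simpa [s] using h.1)
  have hnorm (i : ι) : ‖dyadicLayer l (y i)‖ ≤ (1 / 2) ^ l := by
    unfold dyadicLayer
    split_ifs with h
    · exact h.2
    · simp
  have hcard : (#s : ℝ) ≤ (2 ^ q) ^ (l + 1) := by
    have hpow : ((1 / 2 : ℝ) ^ (l + 1)) ^ q = ((2 ^ q) ^ (l + 1))⁻¹ := by
      rw [← Real.rpow_pow_comm one_half_pos.le, one_div, Real.inv_rpow zero_le_two, inv_pow]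
    have hmarkov :=
      (card_lt_norm_mul_rpow_le (a := (1 / 2) ^ (l + 1)) y (by positivity) hq).trans hy
    rwa [hpow, ← div_eq_mul_inv, div_le_one (by positivity)] at hmarkov
  calc radMean (fun i => dyadicLayer l (y i))
      ≤ betaN X #s * (1 / 2) ^ l := by
        rw [radMean_restrict s _ hsupp]
        exact radMean_le_betaN_mul (by simp) _ (by positivity) fun i => hnorm i
    _ ≤ D * ((2 ^ q) ^ (l + 1)) ^ t * (1 / 2) ^ l := by
        gcongr
        exact (hβ _).trans (by gcongr)
    _ = D * 2 ^ (q * t) * (2 ^ (q * t - 1)) ^ l := by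
        rw [← Real.rpow_pow_comm (by positivity), ← Real.rpow_mul zero_le_two,
          Real.rpow_sub_one two_ne_zero, div_pow, div_pow, one_pow]
        ring

lemma radMean_le_of_sum_rpow_le_one (hD : 0 ≤ D) (hq : 0 < q) (ht : 0 ≤ t) (hqt : q * t < 1)
    (hβ : ∀ m : ℕ, betaN X m ≤ D * (m : ℝ) ^ t) {y : ι → X} (hy : ∑ i, ‖y i‖ ^ q ≤ 1) :
    radMean y ≤ D * 2 ^ (q * t) * (1 - 2 ^ (q * t - 1))⁻¹ := by
  have hunit (i : ι) : ‖y i‖ ≤ 1 := by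
    by_contra! hi
    exact (Real.one_lt_rpow hi hq).not_ge <|
      (single_le_sum (f := fun i => ‖y i‖ ^ q) (fun i _ => by positivity) (mem_univ i)).trans hy
  obtain ⟨N, hN⟩ : ∃ N : ℕ, ∀ i, y i ≠ 0 → (1 / 2) ^ N < ‖y i‖ := by
    refine (Filter.eventually_all.2 fun i => ?_).exists (f := Filter.atTop)
    by_cases hi : y i = 0
    · simp [hi]
    · simpa [hi] using (tendsto_pow_atTop_nhds_zero_of_lt_one (by positivity)
        (by norm_num : (1 / 2 : ℝ) < 1)).eventually_lt_const (norm_pos_iff.2 hi)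
  have hsum : y = fun i => ∑ l ∈ range N, dyadicLayer l (y i) := by
    ext i
    rw [sum_dyadicLayer (hunit i)]
    by_cases hi : y i = 0
    · simp [hi]
    · rw [if_pos (hN i hi)]
  have hr : (2 : ℝ) ^ (q * t - 1) < 1 :=
    Real.rpow_lt_one_of_one_lt_of_neg one_lt_two (by linarith)
  calc radMean y = radMean fun i => ∑ l ∈ range N, dyadicLayer l (y i) := by rw [← hsum]
    _ ≤ ∑ l ∈ range N, radMean fun i => dyadicLayer l (y i) := radMean_sum_le _ _
    _ ≤ ∑ l ∈ range N, D * 2 ^ (q * t) * (2 ^ (q * t - 1)) ^ l :=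
        sum_le_sum fun l _ => radMean_dyadicLayer_le hD hq.le ht hβ hy l
    _ ≤ D * 2 ^ (q * t) * (1 - 2 ^ (q * t - 1))⁻¹ := by
        rw [← mul_sum, ← tsum_geometric_of_lt_one (by positivity) hr]
        gcongr
        exact (summable_geometric_of_lt_one (by positivity) hr).sum_le_tsum _
          fun _ _ => by positivity

lemma exists_hasTypeWith_of_betaN_le_rpow (hD : 0 ≤ D) (hq : 0 < q) (ht : 0 ≤ t)
    (hqt : q * t < 1) (hβ : ∀ m : ℕ, betaN X m ≤ D * (m : ℝ) ^ t) :
    ∃ K, HasTypeWith X q K := by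
  refine ⟨D * 2 ^ (q * t) * (1 - 2 ^ (q * t - 1))⁻¹, fun n x => ?_⟩
  rw [rademacherAvg_eq_radMean]
  set c : ℝ := (∑ i, ‖x i‖ ^ q) ^ (1 / q) with hc
  have hsum : 0 ≤ ∑ i, ‖x i‖ ^ q := by positivity
  have hcq : c ^ q = ∑ i, ‖x i‖ ^ q := by
    rw [hc, one_div, Real.rpow_inv_rpow hsum hq.ne']
  rcases (show 0 ≤ c by positivity).eq_or_lt with hc0 | hc0
  · rw [← hc0, Real.zero_rpow hq.ne', eq_comm,
      sum_eq_zero_iff_of_nonneg fun _ _ => by positivity] at hcq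
    have hx (i : Fin n) : ‖x i‖ = 0 :=
      (Real.rpow_eq_zero (norm_nonneg _) hq.ne').1 (hcq i (mem_univ i))
    rw [← hc0, mul_zero]
    exact (radMean_le_sum_norm x).trans (by simp [hx])
  · have hunit : ∑ i, ‖c⁻¹ • x i‖ ^ q ≤ 1 := by
      simp only [norm_smul, norm_inv, Real.norm_of_nonneg hc0.le]
      simp only [Real.mul_rpow (inv_nonneg.2 hc0.le) (norm_nonneg _), ← mul_sum,
        Real.inv_rpow hc0.le, ← hcq]
      rw [inv_mul_cancel₀ (by positivity)]
    have h := radMean_le_of_sum_rpow_le_one hD hq ht hqt hβ hunit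
    rwa [radMean_smul, abs_of_pos (inv_pos.2 hc0), inv_mul_le_iff₀ hc0, mul_comm] at h

end Growth
/-! ### Dvoretzky–Rogers systems -/

section DvoretzkyRogers

open Module

variable {V X : Type*} [NormedAddCommGroup V] [InnerProductSpace ℝ V]
  [NormedAddCommGroup X] [NormedSpace ℝ X]

lemma exists_orthonormal_forall {P : V → Prop} {N : ℕ}
    (h : ∀ K : Submodule ℝ V, finrank ℝ K < N → ∃ v ∈ Kᗮ, ‖v‖ = 1 ∧ P v) :
    ∃ f : Fin N → V, Orthonormal ℝ f ∧ ∀ i, P (f i) := by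
  induction N with
  | zero => exact ⟨Fin.elim0, .of_isEmpty _, fun i => i.elim0⟩
  | succ N ih =>
    obtain ⟨f, hf, hPf⟩ := ih fun K hK => h K (hK.trans N.lt_succ_self)
    obtain ⟨v, hvK, hv, hPv⟩ := h (Submodule.span ℝ (Set.range f)) (by
      rw [finrank_span_eq_card hf.linearIndependent, Fintype.card_fin]
      exact N.lt_succ_self)
    have horth (i : Fin N) : inner ℝ v (f i) = 0 :=
      Submodule.inner_left_of_mem_orthogonal (Submodule.subset_span (Set.mem_range_self i)) hvK
    exact ⟨Matrix.vecCons v f, orthonormal_vecCons_iff.2 ⟨hv, horth, hf⟩,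
      Fin.forall_fin_succ.2 ⟨hPv, hPf⟩⟩

lemma weakSqSumLE_of_orthonormal [CompleteSpace V] {κ : Type*} [Fintype κ] {f : κ → V}
    (hf : Orthonormal ℝ f) {T : V →L[ℝ] X} (hT : ‖T‖ ≤ 1) : WeakSqSumLE (fun j => T (f j)) 1 := by
  intro φ hφ
  obtain ⟨w, hw⟩ := (InnerProductSpace.toDual ℝ V).surjective (φ ∘L T)
  have hnorm : ‖w‖ ≤ 1 := by
    rw [← (InnerProductSpace.toDual ℝ V).norm_map, hw]
    exact (φ.opNorm_comp_le T).trans (mul_le_one₀ hφ (norm_nonneg _) hT)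
  have hinner (v : V) : φ (T v) = inner ℝ v w := by
    rw [real_inner_comm, ← InnerProductSpace.toDual_apply_apply, hw]
    rfl
  calc ∑ j, φ (T (f j)) ^ 2 = ∑ j, ‖inner ℝ (f j) w‖ ^ 2 := by
        simp only [hinner, Real.norm_eq_abs, sq_abs]
    _ ≤ ‖w‖ ^ 2 := hf.sum_inner_products_le w
    _ ≤ 1 := pow_le_one₀ (norm_nonneg _) hnorm

variable [FiniteDimensional ℝ V]

lemma det_smul_starProjection_add_smul_starProjection (K : Submodule ℝ V) (a b : ℝ) :
    (a • K.starProjection + b • Kᗮ.starProjection).det = a ^ finrank ℝ K * b ^ finrank ℝ Kᗮ := by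
  let e := K.prodEquivOfIsCompl _ K.isCompl_orthogonal
  have hconj : ((a • K.starProjection + b • Kᗮ.starProjection : V →L[ℝ] V) : V →ₗ[ℝ] V)
      = e ∘ₗ ((a • LinearMap.id).prodMap (b • LinearMap.id)) ∘ₗ (e.symm : V →ₗ[ℝ] K × Kᗮ) := by
    refine LinearMap.ext fun v => ?_
    obtain ⟨⟨k, w⟩, rfl⟩ := e.surjective v
    have hk : K.starProjection (e (k, w)) = k := by
      rw [show e (k, w) = (k + w : V) from rfl, map_add, Submodule.starProjection_eq_self_iff.2 k.2,
        (Submodule.starProjection_apply_eq_zero_iff _).2 w.2, add_zero]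
    have hw : Kᗮ.starProjection (e (k, w)) = w := by
      rw [show e (k, w) = (k + w : V) from rfl, map_add, Submodule.starProjection_eq_self_iff.2 w.2,
        (Submodule.starProjection_apply_eq_zero_iff _).2 (K.le_orthogonal_orthogonal k.2), zero_add]
    calc a • K.starProjection (e (k, w)) + b • Kᗮ.starProjection (e (k, w))
        = e (a • k, b • w) := by rw [hk, hw]; rfl
      _ = e ((a • LinearMap.id).prodMap (b • LinearMap.id) (e.symm (e (k, w)))) := by
          rw [e.symm_apply_apply]
          rfl
  rw [ContinuousLinearMap.det, hconj, LinearMap.det_conj, LinearMap.det_prodMap,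
    LinearMap.det_smul, LinearMap.det_smul, LinearMap.det_id, LinearMap.det_id, mul_one, mul_one]

lemma isCompact_setOf_norm_comp_le_one {ψ : V →L[ℝ] X} (hψ : Injective ψ) :
    IsCompact {Q : V →L[ℝ] V | ‖ψ ∘L Q‖ ≤ 1} := by
  refine Metric.isCompact_of_isClosed_isBounded ?_ ?_
  · exact isClosed_le ((ContinuousLinearMap.compL ℝ V V X ψ).continuous.norm) continuous_const
  · obtain ⟨c, -, hc⟩ :=
      (ψ : V →ₗ[ℝ] X).exists_antilipschitzWith (LinearMap.ker_eq_bot.2 hψ)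
    have hlower (v : V) : ‖v‖ ≤ c * ‖ψ v‖ := by simpa using hc.le_mul_norm_sub v 0
    refine isBounded_iff_forall_norm_le.2 ⟨c, fun Q hQ => Q.opNorm_le_bound c.2 fun v => ?_⟩
    calc ‖Q v‖ ≤ c * ‖(ψ ∘L Q) v‖ := hlower (Q v)
      _ ≤ c * ‖v‖ := by
        gcongr
        exact ((ψ ∘L Q).le_of_opNorm_le hQ v).trans_eq (one_mul _)

lemma exists_max_abs_det {ψ : V →L[ℝ] X} (hψ : Injective ψ) :
    ∃ Q : V →L[ℝ] V, ‖ψ ∘L Q‖ ≤ 1 ∧ Q.det ≠ 0 ∧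
      ∀ R : V →L[ℝ] V, ‖ψ ∘L R‖ ≤ 1 → |R.det| ≤ |Q.det| := by
  let c : ℝ := (‖ψ‖ + 1)⁻¹
  have hc : 0 < c := by positivity
  let R₀ : V →L[ℝ] V := c • ContinuousLinearMap.id ℝ V
  have hR₀ : ‖ψ ∘L R₀‖ ≤ 1 := by
    rw [ContinuousLinearMap.comp_smul, ContinuousLinearMap.comp_id, norm_smul,
      Real.norm_of_nonneg hc.le, inv_mul_le_one₀ (by positivity)]
    linarith
  have hdet : R₀.det ≠ 0 := by
    have : R₀.det = c ^ finrank ℝ V * 1 := by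
      rw [← LinearMap.det_id (A := ℝ) (M := V), ← LinearMap.det_smul]
      rfl
    rw [this]
    positivity
  obtain ⟨Q, hQ, hmax⟩ := (isCompact_setOf_norm_comp_le_one hψ).exists_isMaxOn ⟨R₀, hR₀⟩
    ContinuousLinearMap.continuous_det.abs.continuousOn
  exact ⟨Q, hQ, abs_pos.1 ((abs_pos.2 hdet).trans_le (hmax hR₀)), fun R hR => hmax hR⟩

lemma one_lt_det_half_starProjection_add_two_starProjection {K : Submodule ℝ V}
    (hK : 2 * finrank ℝ K < finrank ℝ V) :
    1 < ((1 / 2 : ℝ) • K.starProjection + (2 : ℝ) • Kᗮ.starProjection).det := by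
  have hfin := K.finrank_add_finrank_orthogonal
  obtain ⟨r, hr, hr0⟩ : ∃ r, finrank ℝ Kᗮ = finrank ℝ K + r ∧ r ≠ 0 :=
    ⟨finrank ℝ Kᗮ - finrank ℝ K, by omega, by omega⟩
  rw [det_smul_starProjection_add_smul_starProjection, hr, pow_add, ← mul_assoc, ← mul_pow,
    one_div, inv_mul_cancel₀ two_ne_zero, one_pow, one_mul]
  exact one_lt_pow₀ one_lt_two hr0

lemma norm_comp_smul_starProjection_add_smul_starProjection_le (T : V →L[ℝ] X)
    {K : Submodule ℝ V} {a b c : ℝ} (ha : 0 ≤ a) (hb : 0 ≤ b) (hc : 0 ≤ c)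
    (hT : ∀ v ∈ Kᗮ, ‖T v‖ ≤ c * ‖v‖) :
    ‖T ∘L (a • K.starProjection + b • Kᗮ.starProjection)‖ ≤ a * ‖T‖ + b * c := by
  refine ContinuousLinearMap.opNorm_le_bound _ (by positivity) fun v => ?_
  have hsplit : (T ∘L (a • K.starProjection + b • Kᗮ.starProjection)) v
      = a • T (K.starProjection v) + b • T (Kᗮ.starProjection v) := by simp
  calc ‖(T ∘L (a • K.starProjection + b • Kᗮ.starProjection)) v‖
      ≤ a * ‖T (K.starProjection v)‖ + b * ‖T (Kᗮ.starProjection v)‖ := by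
        rw [hsplit]
        refine (norm_add_le _ _).trans_eq ?_
        rw [norm_smul, norm_smul, Real.norm_of_nonneg ha, Real.norm_of_nonneg hb]
    _ ≤ a * (‖T‖ * ‖v‖) + b * (c * ‖v‖) := by
        gcongr
        · exact T.le_opNorm_of_le (K.norm_starProjection_apply_le v)
        · exact (hT _ (Kᗮ.starProjection_apply_mem v)).trans
            (by gcongr; exact Kᗮ.norm_starProjection_apply_le v)
    _ = (a * ‖T‖ + b * c) * ‖v‖ := by ring

/-- If `ψ ∘ Q` were small on `Kᗮ`, one could shrink `Q` on `K` and stretch it on `Kᗮ`, increasing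
the determinant. -/
lemma exists_mem_orthogonal_le_norm {ψ : V →L[ℝ] X} {Q : V →L[ℝ] V} (hQ : ‖ψ ∘L Q‖ ≤ 1)
    (hdet : Q.det ≠ 0) (hmax : ∀ R : V →L[ℝ] V, ‖ψ ∘L R‖ ≤ 1 → |R.det| ≤ |Q.det|)
    {K : Submodule ℝ V} (hK : 2 * finrank ℝ K < finrank ℝ V) :
    ∃ v ∈ Kᗮ, ‖v‖ = 1 ∧ 1 / 4 ≤ ‖ψ (Q v)‖ := by
  by_contra! hsmall
  have hsmall' (v : V) (hv : v ∈ Kᗮ) : ‖(ψ ∘L Q) v‖ ≤ 1 / 4 * ‖v‖ := by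
    rcases eq_or_ne v 0 with rfl | hv0
    · simp
    have h := hsmall (‖v‖⁻¹ • v) (Kᗮ.smul_mem _ hv) (norm_smul_inv_norm hv0)
    rw [map_smul, map_smul, norm_smul, norm_inv, norm_norm,
      inv_mul_lt_iff₀ (norm_pos_iff.2 hv0), mul_comm] at h
    exact h.le
  let D : V →L[ℝ] V := (1 / 2 : ℝ) • K.starProjection + (2 : ℝ) • Kᗮ.starProjection
  have hD : ‖ψ ∘L Q ∘L D‖ ≤ 1 := by
    have hnorm := norm_comp_smul_starProjection_add_smul_starProjection_le (ψ ∘L Q)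
      one_half_pos.le zero_le_two (by norm_num) hsmall'
    rw [ContinuousLinearMap.comp_assoc] at hnorm
    linarith
  have hdetD : 1 < |D.det| :=
    (one_lt_det_half_starProjection_add_two_starProjection hK).trans_le (le_abs_self _)
  have hcomp : (Q ∘L D).det = Q.det * D.det :=
    LinearMap.det_comp (Q : V →ₗ[ℝ] V) (D : V →ₗ[ℝ] V)
  have h := hmax _ hD
  rw [hcomp, abs_mul] at h
  exact h.not_gt (lt_mul_of_one_lt_right (abs_pos.2 hdet) hdetD)

lemma exists_injective_euclideanSpace (hX : ¬ FiniteDimensional ℝ X) (n : ℕ) :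
    ∃ ψ : EuclideanSpace ℝ (Fin n) →L[ℝ] X, Injective ψ := by
  obtain ⟨v, hv⟩ : ∃ v : Fin n → X, LinearIndependent ℝ v := by
    refine exists_linearIndependent_of_le_rank ((Cardinal.natCast_lt_aleph0).le.trans ?_)
    rwa [← not_lt, rank_lt_aleph0_iff]
  let e := EuclideanSpace.equiv (Fin n) ℝ
  exact ⟨((Fintype.linearCombination ℝ v).toContinuousLinearMap) ∘L (e : _ →L[ℝ] Fin n → ℝ),
    hv.fintypeLinearCombination_injective.comp e.injective⟩

theorem exists_weakSqSumLE_one_le_norm (hX : ¬ FiniteDimensional ℝ X) (N : ℕ) :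
    ∃ y : Fin N → X, WeakSqSumLE y 1 ∧ ∀ j, 1 / 4 ≤ ‖y j‖ := by
  obtain ⟨ψ, hψ⟩ := exists_injective_euclideanSpace hX (2 * N)
  obtain ⟨Q, hQ, hdet, hmax⟩ := exists_max_abs_det hψ
  obtain ⟨f, hf, hlower⟩ := exists_orthonormal_forall (N := N)
    fun K hK => exists_mem_orthogonal_le_norm hQ hdet hmax (by
      rw [finrank_euclideanSpace_fin]
      omega)
  exact ⟨fun j => ψ (Q (f j)), weakSqSumLE_of_orthonormal hf hQ, hlower⟩

end DvoretzkyRogers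

/-! ### Gaussian approximation by repetition -/

section NormalizedSignSum

variable {m : ℕ}

/-- The normalised sum `m ^ (-1/2) * ∑ ωᵢ` of `m` signs, an approximation of a standard Gaussian
variable. -/
noncomputable def normalizedSignSum (ω : Fin m → ℤˣ) : ℝ := (√m)⁻¹ * ∑ i, ((ω i : ℤ) : ℝ)

lemma normalizedSignSum_one : normalizedSignSum (1 : Fin m → ℤˣ) = √m := by
  simp [normalizedSignSum, inv_mul_eq_div]

lemma expect_sum_sign_sq (m : ℕ) : 𝔼 ω : Fin m → ℤˣ, (∑ i, ((ω i : ℤ) : ℝ)) ^ 2 = m := by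
  induction m with
  | zero => simp
  | succ m ih =>
    have hstep (s : ℝ) : 𝔼 u : ℤˣ, (((u : ℤ) : ℝ) + s) ^ 2 = s ^ 2 + 1 := by
      rw [expect_units_int]
      push_cast
      ring
    simp only [expect_fin_cons, Fin.sum_univ_succ, Fin.cons_zero, Fin.cons_succ]
    rw [expect_comm]
    simp only [hstep, expect_add_distrib, ih, Fintype.expect_const]
    push_cast
    rfl

lemma expect_sum_sign_pow_four (m : ℕ) :
    𝔼 ω : Fin m → ℤˣ, (∑ i, ((ω i : ℤ) : ℝ)) ^ 4 = 3 * m ^ 2 - 2 * m := by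
  induction m with
  | zero => simp
  | succ m ih =>
    have hstep (s : ℝ) : 𝔼 u : ℤˣ, (((u : ℤ) : ℝ) + s) ^ 4 = s ^ 4 + 6 * s ^ 2 + 1 := by
      rw [expect_units_int]
      push_cast
      ring
    simp only [expect_fin_cons, Fin.sum_univ_succ, Fin.cons_zero, Fin.cons_succ]
    rw [expect_comm]
    simp only [hstep, expect_add_distrib, ← mul_expect, ih, expect_sum_sign_sq,
      Fintype.expect_const]
    push_cast
    ring

lemma expect_normalizedSignSum_sq (hm : m ≠ 0) :
    𝔼 ω : Fin m → ℤˣ, normalizedSignSum ω ^ 2 = 1 := by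
  simp only [normalizedSignSum, mul_pow, ← mul_expect, expect_sum_sign_sq]
  rw [inv_pow, Real.sq_sqrt m.cast_nonneg, inv_mul_cancel₀ (Nat.cast_ne_zero.2 hm)]

lemma expect_normalizedSignSum_pow_four_le (m : ℕ) :
    𝔼 ω : Fin m → ℤˣ, normalizedSignSum ω ^ 4 ≤ 3 := by
  have hsqrt : √(m : ℝ) ^ 4 = (m : ℝ) ^ 2 := by
    rw [show 4 = 2 * 2 from rfl, pow_mul, Real.sq_sqrt m.cast_nonneg]
  simp only [normalizedSignSum, mul_pow, ← mul_expect, expect_sum_sign_pow_four]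
  rw [inv_pow, hsqrt]
  refine inv_mul_le_of_le_mul₀ (by positivity) (by norm_num) ?_
  linarith [m.cast_nonneg (α := ℝ)]

lemma three_eighths_le_expect_abs_normalizedSignSum (hm : m ≠ 0) :
    3 / 8 ≤ 𝔼 ω : Fin m → ℤˣ, |normalizedSignSum ω| := by
  have hpoly (u : ℝ) : 3 / 4 * u ^ 2 - 1 / 8 * u ^ 4 ≤ |u| := by
    have hu := abs_nonneg u
    have hcubic : 0 ≤ |u| ^ 3 - 6 * |u| + 8 := by
      nlinarith [sq_nonneg (|u| - 3 / 2), mul_nonneg hu (sq_nonneg (|u| - 3 / 2))]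
    have hfour : u ^ 4 = |u| ^ 4 := by rw [pow_abs, abs_of_nonneg (by positivity)]
    rw [hfour, ← sq_abs u]
    nlinarith [mul_nonneg hu hcubic]
  calc (3 / 8 : ℝ) ≤ 3 / 4 * 𝔼 ω : Fin m → ℤˣ, normalizedSignSum ω ^ 2
        - 1 / 8 * 𝔼 ω : Fin m → ℤˣ, normalizedSignSum ω ^ 4 := by
        rw [expect_normalizedSignSum_sq hm]
        linarith [expect_normalizedSignSum_pow_four_le m]
    _ = 𝔼 ω : Fin m → ℤˣ, (3 / 4 * normalizedSignSum ω ^ 2 - 1 / 8 * normalizedSignSum ω ^ 4) := by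
        rw [expect_sub_distrib, mul_expect, mul_expect]
    _ ≤ 𝔼 ω : Fin m → ℤˣ, |normalizedSignSum ω| := by
        gcongr with ω
        exact hpoly _

end NormalizedSignSum

section Repetition

variable {κ X : Type*} [Fintype κ] [NormedAddCommGroup X] [NormedSpace ℝ X] {m n : ℕ} {C : ℝ}

/-- The family consisting of `m` copies of `m ^ (-1/2) • y`. Its signed sums approximate the
Gaussian sums `∑ gⱼ yⱼ` as `m → ∞`. -/
noncomputable def repetition (m : ℕ) (y : κ → X) : Fin m × κ → X := fun z => (√m)⁻¹ • y z.2

lemma weakSqSumLE_repetition {y : κ → X} (h : WeakSqSumLE y C) (hm : m ≠ 0) :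
    WeakSqSumLE (repetition m y) C := by
  intro φ hφ
  refine (h φ hφ).trans' (le_of_eq ?_)
  simp only [repetition, map_smul, smul_eq_mul, mul_pow, inv_pow,
    Real.sq_sqrt m.cast_nonneg, Fintype.sum_prod_type, sum_const, card_univ, Fintype.card_fin,
    nsmul_eq_mul, ← mul_sum]
  exact inv_mul_cancel_left₀ (Nat.cast_ne_zero (R := ℝ).2 hm) _

variable [DecidableEq κ]

lemma radMean_repetition_mul_le {y : κ → X} (h : WeakSqSumLE y C) (hm : m ≠ 0) :
    radMean (repetition (n * m) y)
      ≤ betaN X n / √n * (radMean (repetition m y) + n * √(2 * C)) := by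
  let e : Fin n × (Fin m × κ) ≃ Fin (n * m) × κ :=
    (Equiv.prodAssoc _ _ _).symm.trans (finProdFinEquiv.prodCongr (Equiv.refl κ))
  have hblocks : repetition (n * m) y ∘ e
      = fun z : Fin n × (Fin m × κ) => (√n)⁻¹ • repetition m y z.2 := by
    ext z
    simp [repetition, e, smul_smul, mul_comm]
  have hprod := radMean_prod_le (x := fun _ : Fin n => repetition m y) (radMean_nonneg _)
    (fun _ => le_rfl) fun _ => weakSqSumLE_repetition h hm
  rw [Fintype.card_fin] at hprod
  rw [← radMean_comp_equiv e, hblocks, radMean_smul, abs_of_nonneg (by positivity),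
    div_eq_inv_mul, mul_assoc]
  gcongr

lemma radMean_repetition (m : ℕ) (y : κ → X) : radMean (repetition m y)
    = 𝔼 η : κ → Fin m → ℤˣ, radMean fun j => normalizedSignSum (η j) • y j := by
  have hsum (v : X) (ω : Fin m → ℤˣ) :
      signedSum (fun _ => (√m)⁻¹ • v) ω = normalizedSignSum ω • v := by
    rw [signedSum_smul (√m)⁻¹ fun _ => v, normalizedSignSum, mul_smul, sum_smul]
    simp only [signedSum, Units.smul_def, Int.cast_smul_eq_zsmul]
  rw [← radMean_comp_equiv (Equiv.prodComm κ (Fin m))]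
  refine (radMean_prod fun (j : κ) (_ : Fin m) => (√m)⁻¹ • y j).trans ?_
  simp only [hsum]

lemma mul_radMean_le_radMean_repetition (hm : m ≠ 0) (y : κ → X) :
    3 / 8 * radMean y ≤ radMean (repetition m y) := by
  calc 3 / 8 * radMean y
      ≤ (𝔼 ω : Fin m → ℤˣ, |normalizedSignSum ω|) * radMean y := by
        have := radMean_nonneg y
        gcongr
        exact three_eighths_le_expect_abs_normalizedSignSum hm
    _ = radMean fun j => (𝔼 η : κ → Fin m → ℤˣ, |normalizedSignSum (η j)|) • y j := by
        simp only [expect_pi_eval (g := fun ω : Fin m → ℤˣ => |normalizedSignSum ω|)]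
        rw [radMean_smul, abs_of_nonneg (expect_nonneg fun _ _ => abs_nonneg _)]
    _ ≤ 𝔼 η : κ → Fin m → ℤˣ, radMean fun j => |normalizedSignSum (η j)| • y j :=
        radMean_expect_smul_le (fun (η : κ → Fin m → ℤˣ) j => |normalizedSignSum (η j)|) y
    _ = radMean (repetition m y) := by simp only [radMean_abs_smul, radMean_repetition]

/-- With probability close to one, some block of signs is constant, and a single such block
contributes `√m • yⱼ`. -/
lemma sqrt_mul_le_radMean_repetition (m : ℕ) {y : κ → X} {r : ℝ} (hy : ∀ j, r ≤ ‖y j‖) :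
    √m * r * (1 - (1 - ((2 : ℝ) ^ m)⁻¹) ^ Fintype.card κ) ≤ radMean (repetition m y) := by
  have hcard : (Fintype.card (Fin m → ℤˣ) : ℝ) = 2 ^ m := by simp
  rw [← hcard, ← expect_ite_exists_eq (1 : Fin m → ℤˣ), mul_expect, radMean_repetition]
  gcongr with η
  split_ifs with h
  · obtain ⟨j, hj⟩ := h
    calc √m * r * 1 ≤ √m * ‖y j‖ := by
          rw [mul_one]
          gcongr
          exact hy j
      _ = ‖normalizedSignSum (η j) • y j‖ := by
          rw [hj, normalizedSignSum_one, norm_smul, Real.norm_of_nonneg (Real.sqrt_nonneg _)]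
      _ ≤ radMean fun j => normalizedSignSum (η j) • y j :=
          norm_le_radMean (fun j => normalizedSignSum (η j) • y j) j
  · rw [mul_zero]
    exact radMean_nonneg _

end Repetition

section SqrtLeBetaN

open Filter Topology

variable {κ X : Type*} [Fintype κ] [DecidableEq κ] [NormedAddCommGroup X] [NormedSpace ℝ X] {n : ℕ}

lemma WeakSqSumLE.radMean_repetition_pow_le {y : κ → X} {C : ℝ} (h : WeakSqSumLE y C)
    (hlt : betaN X n < √n) (l : ℕ) :
    radMean (repetition (n ^ l) y)
      ≤ (betaN X n / √n) ^ l * radMean (repetition 1 y)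
        + betaN X n / √n * n * √(2 * C) / (1 - betaN X n / √n) := by
  have hβ := betaN_nonneg X n
  have hsqrt : 0 < √(n : ℝ) := hβ.trans_lt hlt
  have hn : n ≠ 0 := Nat.cast_ne_zero.1 (Real.sqrt_pos.1 hsqrt).ne'
  set c := betaN X n / √n
  have hc : 0 < 1 - c := sub_pos.2 ((div_lt_one hsqrt).2 hlt)
  set B := c * n * √(2 * C) / (1 - c) with hB
  have hfix : c * (B + n * √(2 * C)) = B := by
    rw [hB]
    field_simp
    ring
  induction l with
  | zero =>
    rw [pow_zero, pow_zero, one_mul]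
    exact le_add_of_nonneg_right (by positivity)
  | succ l ih =>
    calc radMean (repetition (n ^ (l + 1)) y)
        ≤ c * (radMean (repetition (n ^ l) y) + n * √(2 * C)) := by
          rw [pow_succ']
          exact radMean_repetition_mul_le h (pow_ne_zero l hn)
      _ ≤ c * (c ^ l * radMean (repetition 1 y) + B + n * √(2 * C)) := by gcongr
      _ = c ^ (l + 1) * radMean (repetition 1 y) + c * (B + n * √(2 * C)) := by ring
      _ = c ^ (l + 1) * radMean (repetition 1 y) + B := by rw [hfix]

lemma WeakSqSumLE.mul_radMean_le_of_betaN_lt_sqrt {y : κ → X} {C : ℝ} (h : WeakSqSumLE y C)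
    (hlt : betaN X n < √n) :
    3 / 8 * radMean y ≤ betaN X n / √n * n * √(2 * C) / (1 - betaN X n / √n) := by
  have hβ := betaN_nonneg X n
  have hsqrt : 0 < √(n : ℝ) := hβ.trans_lt hlt
  have hn : n ≠ 0 := Nat.cast_ne_zero.1 (Real.sqrt_pos.1 hsqrt).ne'
  have hpow := tendsto_pow_atTop_nhds_zero_of_lt_one (div_nonneg hβ hsqrt.le)
    ((div_lt_one hsqrt).2 hlt)
  have hlim := (hpow.mul_const (radMean (repetition 1 y))).add_const
    (betaN X n / √n * n * √(2 * C) / (1 - betaN X n / √n))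
  rw [zero_mul, zero_add] at hlim
  exact ge_of_tendsto' hlim fun l =>
    (mul_radMean_le_radMean_repetition (pow_ne_zero l hn) y).trans
      (h.radMean_repetition_pow_le hlt l)

lemma exists_weakSqSumLE_one_lt_radMean (hX : ¬ FiniteDimensional ℝ X) (B : ℝ) :
    ∃ (k N : ℕ) (z : Fin k × Fin N → X), WeakSqSumLE z 1 ∧ B < radMean z := by
  by_contra! hbdd
  have hbound (k : ℕ) (hk : k ≠ 0) : √k * (1 / 4) ≤ B := by
    have hpos : 0 < ((2 : ℝ) ^ k)⁻¹ := by positivity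
    have hle : ((2 : ℝ) ^ k)⁻¹ ≤ 1 := inv_le_one_of_one_le₀ (one_le_pow₀ one_le_two)
    have hpow := tendsto_pow_atTop_nhds_zero_of_lt_one (sub_nonneg.2 hle) (sub_lt_self 1 hpos)
    have hlim := (hpow.const_sub 1).const_mul (√k * (1 / 4))
    rw [sub_zero, mul_one] at hlim
    refine le_of_tendsto' hlim fun N => ?_
    obtain ⟨y, hweak, hnorm⟩ := exists_weakSqSumLE_one_le_norm hX N
    have hrep := sqrt_mul_le_radMean_repetition k hnorm
    rw [Fintype.card_fin] at hrep
    exact hrep.trans (hbdd k N _ (weakSqSumLE_repetition hweak hk))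
  obtain ⟨k, hk⟩ := exists_nat_gt ((4 * B) ^ 2)
  have hsqrt : 4 * B < √((k + 1 : ℕ) : ℝ) := by
    refine Real.lt_sqrt_of_sq_lt (hk.trans ?_)
    exact_mod_cast k.lt_succ_self
  linarith [hbound (k + 1) k.succ_ne_zero]

theorem sqrt_le_betaN (hX : ¬ FiniteDimensional ℝ X) (n : ℕ) : √n ≤ betaN X n := by
  by_contra! hlt
  obtain ⟨k, N, z, hweak, hz⟩ := exists_weakSqSumLE_one_lt_radMean hX
    (8 / 3 * (betaN X n / √n * n * √(2 * 1) / (1 - betaN X n / √n)))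
  linarith [hweak.mul_radMean_le_of_betaN_lt_sqrt hlt]

end SqrtLeBetaN

/-! ### Comparison with powers of `n` -/

section Comparison

variable {X : Type*} [NormedAddCommGroup X] {p K : ℝ}

lemma constant_nonneg_of_hasTypeWith [Nontrivial X] (h : HasTypeWith X p K) : 0 ≤ K := by
  obtain ⟨v, hv⟩ := exists_ne (0 : X)
  have hpos : 0 < (∑ _i : Fin 1, ‖v‖ ^ p) ^ (1 / p) := by
    rw [Fin.sum_univ_one]
    exact Real.rpow_pos_of_pos (Real.rpow_pos_of_pos (norm_pos_iff.2 hv) p) _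
  have hmean := rademacherAvg_eq_radMean (fun _ : Fin 1 => v) ▸ h 1 fun _ => v
  exact nonneg_of_mul_nonneg_left ((radMean_nonneg _).trans hmean) hpos

theorem betaN_le_of_hasTypeWith [Nontrivial X] (h : HasTypeWith X p K) (hp : 0 < p) (n : ℕ) :
    betaN X n ≤ K * (n : ℝ) ^ (1 / p) := by
  refine betaN_le fun x hx => ?_
  have hK := constant_nonneg_of_hasTypeWith h
  have hsum : ∑ i, ‖x i‖ ^ p ≤ n := by
    calc ∑ i, ‖x i‖ ^ p ≤ ∑ _i : Fin n, (1 : ℝ) :=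
          sum_le_sum fun i _ => Real.rpow_le_one (norm_nonneg _) (hx i) hp.le
      _ = n := by simp
  calc radMean x ≤ K * (∑ i, ‖x i‖ ^ p) ^ (1 / p) := rademacherAvg_eq_radMean x ▸ h n x
    _ ≤ K * (n : ℝ) ^ (1 / p) := by gcongr

variable [NormedSpace ℝ X]

lemma exists_hasTypeWith_of_betaN_lt_rpow (hp : 0 < p) (hp2 : p < 2) {n : ℕ} (hn : 2 ≤ n)
    (hlt : betaN X n < (n : ℝ) ^ (1 / p)) :
    ∃ q, p < q ∧ q ≤ 2 ∧ ∃ K, HasTypeWith X q K := by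
  have hcont : ContinuousAt (fun t : ℝ => (n : ℝ) ^ t) (1 / p) :=
    Real.continuousAt_const_rpow (by positivity)
  have hnear : ∀ᶠ t in nhdsWithin (1 / p) (Set.Iio (1 / p)), betaN X n < (n : ℝ) ^ t :=
    nhdsWithin_le_nhds (hcont.eventually_const_lt hlt)
  obtain ⟨t, hβ, ht, htp⟩ :=
    (hnear.and (Ioo_mem_nhdsLT (one_div_lt_one_div_of_lt hp hp2))).exists
  have ht0 : 0 < t := one_half_pos.trans ht
  obtain ⟨D, hD, hgrowth⟩ := exists_betaN_le_rpow hn ht.le hβ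
  obtain ⟨q, hpq, hqt⟩ := exists_between ((lt_one_div hp ht0).2 htp)
  exact ⟨q, hpq, (hqt.trans ((one_div_lt ht0 two_pos).2 ht)).le,
    exists_hasTypeWith_of_betaN_le_rpow hD (hp.trans hpq) ht0.le ((lt_div_iff₀ ht0).1 hqt) hgrowth⟩

theorem rpow_le_betaN (hX : ¬ FiniteDimensional ℝ X) (hp : 0 < p) (hp2 : p ≤ 2)
    (hmax : ∀ q : ℝ, p < q → q ≤ 2 → ¬ ∃ K' : ℝ, HasTypeWith X q K') (n : ℕ) :
    (n : ℝ) ^ (1 / p) ≤ betaN X n := by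
  have hsqrt := sqrt_le_betaN hX n
  rcases hp2.eq_or_lt with rfl | hp2
  · rwa [← Real.sqrt_eq_rpow]
  rcases lt_or_ge n 2 with hn | hn
  · interval_cases n
    · simpa [hp.ne'] using hsqrt
    · simpa using hsqrt
  · by_contra! hlt
    obtain ⟨q, hpq, hq2, hq⟩ := exists_hasTypeWith_of_betaN_lt_rpow hp hp2 hn hlt
    exact hmax q hpq hq2 hq

end Comparison

end Rademacher

theorem betaN_bounds_of_type_general {𝕜 X : Type*} [RCLike 𝕜]
    [NormedAddCommGroup X] [NormedSpace 𝕜 X] (hinf : ¬ FiniteDimensional 𝕜 X)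
    {p K : ℝ} (hp : p ∈ Set.Icc (1 : ℝ) 2) (htype : HasTypeWith X p K)
    (hmax : ∀ q : ℝ, p < q → q ≤ 2 → ¬ ∃ K' : ℝ, HasTypeWith X q K') (n : ℕ) :
    (n : ℝ) ^ (1 / p) ≤ betaN X n ∧ betaN X n ≤ K * (n : ℝ) ^ (1 / p) := by
  let _ : NormedSpace ℝ X := NormedSpace.restrictScalars ℝ 𝕜 X
  have : IsScalarTower ℝ 𝕜 X := RestrictScalars.isScalarTower ℝ 𝕜 X
  have hinfReal : ¬ FiniteDimensional ℝ X := fun h =>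
    hinf (Module.Finite.of_restrictScalars_finite ℝ 𝕜 X)
  have : Nontrivial X := by
    by_contra! hX
    exact hinf inferInstance
  have hp0 : 0 < p := one_pos.trans_le hp.1
  exact ⟨Rademacher.rpow_le_betaN hinfReal hp0 hp.2 hmax n,
    Rademacher.betaN_le_of_hasTypeWith htype hp0 n⟩

/-- **Lemma 2.7 of the paper.** If `X` is an infinite-dimensional Banach space of type
`p ∈ [1,2]` with constant `K`, and `X` has no type `q` for `p < q ≤ 2` (i.e. `p_X = p`),
then `n^{1/p} ≤ β_n(X) ≤ K n^{1/p}` for every `n ≥ 1`. -/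
theorem betaN_bounds_of_type {𝕜 X : Type*} [RCLike 𝕜]
    [NormedAddCommGroup X] [NormedSpace 𝕜 X] [CompleteSpace X]
    (hinf : ¬ FiniteDimensional 𝕜 X)
    (p K : ℝ) (hp : p ∈ Set.Icc (1 : ℝ) 2)
    (htype : HasTypeWith X p K)
    (hmax : ∀ q : ℝ, p < q → q ≤ 2 → ¬ ∃ K' : ℝ, HasTypeWith X q K')
    (n : ℕ) (hn : 1 ≤ n) :
    (n : ℝ) ^ (1 / p) ≤ betaN X n ∧ betaN X n ≤ K * (n : ℝ) ^ (1 / p) :=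
  betaN_bounds_of_type_general hinf hp htype hmax n
end

section
/- Let X be an infinite-dimensional Banach space (over ℝ or ℂ) and p ∈ [1,2]. Suppose that for every q with p < q ≤ 2, X does not have type q. Then for every n ≥ 1 and every δ > 0 there exist vectors x₁, …, xₙ in the closed unit ball of X with 𝔼‖Σ_{i=1}^n ε_i x_i‖ ≥ n^{1/p}/(1+δ); consequently β_n(X) ≥ n^{1/p} for every n ≥ 1. -/
/-! For `p < 2`, a power estimate `β_N ≤ D N ^ (1 / r)` implies type `q` for every `q < r`: split
the vectors into dyadic layers according to their norms and sum the resulting geometric series.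
Moreover `β_{nm} ≤ β_n (β_m + n √m)`, because the norm of a Rademacher sum of `m` vectors in the
unit ball deviates from its mean by at most `√m` on average. Thus, if `β_n < n ^ (1 / p)` for a
single `n`, then `β_n ≤ n ^ (1 / r)` for some `r ∈ (p, 2)`, iterating the inequality along the
powers of `n` yields the power estimate with this `r`, and `X` has a type better than `p`.

For `p = 2` the claim `√n ≤ β_n` holds in every infinite-dimensional space, by the Dvoretzky–Rogers
argument: an `N`-dimensional subspace in Löwner's position carries a Euclidean norm `|·| ≤ ‖·‖`, and
for `N` large it contains `n` vectors which are unit vectors for `‖·‖` and almost orthonormal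
for `|·|`. -/

open Finset Module
open scoped BigOperators InnerProductSpace

section SignAverages

variable {ι κ X : Type*} [Fintype ι] [DecidableEq ι] [Fintype κ] [DecidableEq κ]

lemma expect_sign_mul (δ : ι → ℤˣ) (f : (ι → ℤˣ) → ℝ) :
    𝔼 ε, f (ε * δ) = 𝔼 ε, f ε :=
  Fintype.expect_equiv (Equiv.mulRight δ) _ _ fun _ => rfl

-- Averaging over the translations by sign vectors on `κ` makes all sign patterns on `κ` equally
-- likely.
lemma expect_sign_comp_of_injective {e : κ → ι} (he : e.Injective) (f : (κ → ℤˣ) → ℝ) :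
    𝔼 ε : ι → ℤˣ, f (ε ∘ e) = 𝔼 ε, f ε := by
  have translate (δ : κ → ℤˣ) : 𝔼 ε : ι → ℤˣ, f (ε ∘ e * δ) = 𝔼 ε : ι → ℤˣ, f (ε ∘ e) := by
    rw [← expect_sign_mul (Function.extend e δ 1) fun ε => f (ε ∘ e)]
    congr! 3 with ε
    simp only [Pi.mul_comp, Function.extend_comp he]
  calc 𝔼 ε : ι → ℤˣ, f (ε ∘ e)
      = 𝔼 δ : κ → ℤˣ, 𝔼 ε : ι → ℤˣ, f (ε ∘ e * δ) := by
        simp only [translate, Fintype.expect_const]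
    _ = 𝔼 ε : ι → ℤˣ, 𝔼 δ : κ → ℤˣ, f (δ * ε ∘ e) := by
        rw [expect_comm]; simp only [mul_comm]
    _ = 𝔼 δ, f δ := by simp only [expect_sign_mul, Fintype.expect_const]

lemma expect_sign_sum_insert [AddCommGroup X] {s : Finset ι} {j : ι} (hj : j ∉ s) (x : ι → X)
    (F : X → ℝ) :
    𝔼 ε : ι → ℤˣ, F (∑ i ∈ insert j s, ε i • x i) =
      (𝔼 ε : ι → ℤˣ, F (x j + ∑ i ∈ s, ε i • x i) +
        𝔼 ε : ι → ℤˣ, F (-x j + ∑ i ∈ s, ε i • x i)) / 2 := by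
  have flip : 𝔼 ε : ι → ℤˣ, F (∑ i ∈ insert j s, ε i • x i) =
      𝔼 ε : ι → ℤˣ, F (-(ε j • x j) + ∑ i ∈ s, ε i • x i) := by
    rw [← expect_sign_mul (Pi.mulSingle j (-1))]
    refine expect_congr rfl fun ε _ => congr_arg F ?_
    rw [sum_insert hj]
    congr 1
    · simp
    · refine sum_congr rfl fun i hi => ?_
      have : i ≠ j := ne_of_mem_of_not_mem hi hj
      simp [this]
  rw [eq_div_iff two_ne_zero, mul_two]
  nth_rewrite 2 [flip]
  simp only [sum_insert hj, ← expect_add_distrib]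
  refine expect_congr rfl fun ε _ => ?_
  rcases Int.units_eq_one_or (ε j) with h | h
  · simp [h]
  · simp [h, add_comm]

variable [NormedAddCommGroup X]

lemma abs_expect_norm_add_sub_le (s : Finset ι) (x : ι → X) (a b : X) :
    |𝔼 ε : ι → ℤˣ, ‖a + ∑ i ∈ s, ε i • x i‖ - 𝔼 ε : ι → ℤˣ, ‖b + ∑ i ∈ s, ε i • x i‖| ≤
      ‖a - b‖ := by
  rw [← expect_sub_distrib]
  refine (abs_expect_le _ _).trans (expect_le univ_nonempty fun ε _ => ?_)
  simpa using abs_norm_sub_norm_le (a + ∑ i ∈ s, ε i • x i) (b + ∑ i ∈ s, ε i • x i)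

lemma expect_sq_norm_add_sum_le (s : Finset ι) (x : ι → X) (a : X) :
    𝔼 ε : ι → ℤˣ, ‖a + ∑ i ∈ s, ε i • x i‖ ^ 2 ≤
      (𝔼 ε : ι → ℤˣ, ‖a + ∑ i ∈ s, ε i • x i‖) ^ 2 + ∑ i ∈ s, ‖x i‖ ^ 2 := by
  induction s using Finset.induction_on generalizing a with
  | empty => simp
  | insert j s hj ih =>
    rw [expect_sign_sum_insert hj x fun y => ‖a + y‖ ^ 2,
      expect_sign_sum_insert hj x fun y => ‖a + y‖, sum_insert hj]
    simp only [← add_assoc]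
    have plus := ih (a + x j)
    have minus := ih (a + -x j)
    have diff := abs_expect_norm_add_sub_le s x (a + x j) (a + -x j)
    set μ := 𝔼 ε : ι → ℤˣ, ‖a + x j + ∑ i ∈ s, ε i • x i‖
    set ν := 𝔼 ε : ι → ℤˣ, ‖a + -x j + ∑ i ∈ s, ε i • x i‖
    have diff' : |μ - ν| ≤ 2 * ‖x j‖ := by
      refine diff.trans ?_
      rw [add_sub_add_left_eq_sub, sub_neg_eq_add, two_mul]
      exact norm_add_le _ _
    have : (μ - ν) ^ 2 ≤ (2 * ‖x j‖) ^ 2 := sq_le_sq' (abs_le.1 diff').1 (abs_le.1 diff').2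
    linear_combination plus / 2 + minus / 2 + this / 4

lemma expect_abs_norm_sum_sub_expect_le (x : ι → X) :
    𝔼 ε : ι → ℤˣ, |‖∑ i, ε i • x i‖ - 𝔼 η : ι → ℤˣ, ‖∑ i, η i • x i‖| ≤
      √(∑ i, ‖x i‖ ^ 2) := by
  set μ := 𝔼 ε : ι → ℤˣ, ‖∑ i, ε i • x i‖ with hμ
  have variance : 𝔼 ε : ι → ℤˣ, (‖∑ i, ε i • x i‖ - μ) ^ 2 ≤ ∑ i, ‖x i‖ ^ 2 := by
    have := expect_sq_norm_add_sum_le univ x 0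
    simp only [zero_add, ← hμ] at this
    simp only [sub_sq, expect_add_distrib, expect_sub_distrib, ← mul_expect, ← expect_mul, ← hμ,
      Fintype.expect_const]
    linarith
  refine Real.le_sqrt_of_sq_le (le_trans ?_ variance)
  have cauchy_schwarz := expect_mul_sq_le_sq_mul_sq univ
    (fun ε : ι → ℤˣ => |‖∑ i, ε i • x i‖ - μ|) 1
  simpa using cauchy_schwarz

lemma expect_norm_sum_sum_eq (x : ι → κ → X) :
    𝔼 ε : ι × κ → ℤˣ, ‖∑ p, ε p • x p.1 p.2‖ =
      𝔼 ε : ι × κ → ℤˣ, 𝔼 δ : ι → ℤˣ, ‖∑ i, δ i • ∑ j, ε (i, j) • x i j‖ := by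
  have translate (δ : ι → ℤˣ) : 𝔼 ε : ι × κ → ℤˣ, ‖∑ p, ε p • x p.1 p.2‖ =
      𝔼 ε : ι × κ → ℤˣ, ‖∑ i, δ i • ∑ j, ε (i, j) • x i j‖ := by
    rw [← expect_sign_mul fun p => δ p.1]
    refine expect_congr rfl fun ε _ => ?_
    simp only [Fintype.sum_prod_type, Pi.mul_apply, mul_comm (ε _), mul_smul, smul_sum]
  rw [expect_comm]
  simp only [← translate, Fintype.expect_const]

lemma rademacherAvg_eq_expect {n : ℕ} (x : Fin n → X) :
    rademacherAvg n x = 𝔼 ε : Fin n → ℤˣ, ‖∑ i, ε i • x i‖ := by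
  let signEquiv : Bool ≃ ℤˣ := Equiv.ofBijective (fun b => if b then 1 else -1) (by decide)
  rw [← Fintype.expect_equiv (Equiv.piCongrRight fun _ : Fin n => signEquiv)
      (fun ε => ‖∑ i, (if ε i then x i else -x i)‖), Fintype.expect_eq_sum_div_card]
  · simp [rademacherAvg, div_eq_inv_mul]
  · intro ε
    refine congr_arg norm (sum_congr rfl fun i _ => ?_)
    cases h : ε i <;> simp [signEquiv, h]

end SignAverages

section BetaN

variable {X : Type*} [NormedAddCommGroup X]

lemma rademacherAvg_nonneg {n : ℕ} (x : Fin n → X) : 0 ≤ rademacherAvg n x := by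
  unfold rademacherAvg
  positivity

lemma rademacherAvg_le_sum_norm {n : ℕ} (x : Fin n → X) : rademacherAvg n x ≤ ∑ i, ‖x i‖ := by
  rw [rademacherAvg_eq_expect]
  refine expect_le univ_nonempty fun ε _ => (norm_sum_le _ _).trans_eq ?_
  simp only [norm_units_zsmul]

lemma rademacherAvg_le_natCast {n : ℕ} {x : Fin n → X} (hx : ∀ i, ‖x i‖ ≤ 1) :
    rademacherAvg n x ≤ n :=
  (rademacherAvg_le_sum_norm x).trans <| by simpa using sum_le_card_nsmul univ _ 1 fun i _ => hx i

lemma rademacherAvg_le_betaN {n : ℕ} {x : Fin n → X} (hx : ∀ i, ‖x i‖ ≤ 1) :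
    rademacherAvg n x ≤ betaN X n :=
  le_csSup ⟨n, by rintro _ ⟨y, hy, rfl⟩; exact rademacherAvg_le_natCast hy⟩ ⟨x, hx, rfl⟩

lemma betaN_le {n : ℕ} {b : ℝ}
    (h : ∀ x : Fin n → X, (∀ i, ‖x i‖ ≤ 1) → rademacherAvg n x ≤ b) : betaN X n ≤ b :=
  csSup_le ⟨_, 0, by simp, rfl⟩ <| by rintro _ ⟨x, hx, rfl⟩; exact h x hx

lemma exists_lt_rademacherAvg_of_lt_betaN {n : ℕ} {b : ℝ} (h : b < betaN X n) :
    ∃ x : Fin n → X, (∀ i, ‖x i‖ ≤ 1) ∧ b < rademacherAvg n x := by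
  by_contra! hx
  exact h.not_ge (betaN_le hx)

lemma betaN_nonneg (X : Type*) [NormedAddCommGroup X] (n : ℕ) : 0 ≤ betaN X n :=
  (rademacherAvg_nonneg 0).trans (rademacherAvg_le_betaN (by simp))

lemma betaN_le_natCast (X : Type*) [NormedAddCommGroup X] (n : ℕ) : betaN X n ≤ n :=
  betaN_le fun _ => rademacherAvg_le_natCast

lemma betaN_mono (X : Type*) [NormedAddCommGroup X] : Monotone (betaN X) := by
  intro m n hmn
  refine betaN_le fun x hx => ?_
  have hinj : (Fin.castLE hmn).Injective := Fin.castLE_injective hmn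
  let y : Fin n → X := Function.extend (Fin.castLE hmn) x 0
  have hy (i : Fin n) : ‖y i‖ ≤ 1 := by
    by_cases h : ∃ j, Fin.castLE hmn j = i
    · obtain ⟨j, rfl⟩ := h
      simpa [y, hinj.extend_apply] using hx j
    · simp [y, Function.extend_apply' _ _ _ h]
  calc rademacherAvg m x
      = 𝔼 ε : Fin n → ℤˣ, ‖∑ j, (ε ∘ Fin.castLE hmn) j • x j‖ := by
        rw [rademacherAvg_eq_expect,
          expect_sign_comp_of_injective hinj fun ε => ‖∑ j, ε j • x j‖]
    _ = rademacherAvg n y := by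
        rw [rademacherAvg_eq_expect]
        refine expect_congr rfl fun ε _ => congr_arg norm ?_
        refine Fintype.sum_of_injective _ hinj _ _ (fun i hi => ?_) fun j => ?_
        · simp [y, Function.extend_apply' _ _ _ hi]
        · simp [y, hinj.extend_apply]
    _ ≤ betaN X n := rademacherAvg_le_betaN hy

lemma expect_abs_norm_row_sub_expect_le {n m : ℕ} {x : Fin n → Fin m → X}
    (hx : ∀ i j, ‖x i j‖ ≤ 1) (i : Fin n) :
    𝔼 ε : Fin n × Fin m → ℤˣ, |‖∑ j, ε (i, j) • x i j‖ - rademacherAvg m (x i)| ≤ √m := by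
  rw [rademacherAvg_eq_expect]
  calc 𝔼 ε : Fin n × Fin m → ℤˣ,
        |‖∑ j, ε (i, j) • x i j‖ - 𝔼 η : Fin m → ℤˣ, ‖∑ j, η j • x i j‖|
      = 𝔼 ε : Fin m → ℤˣ, |‖∑ j, ε j • x i j‖ - 𝔼 η : Fin m → ℤˣ, ‖∑ j, η j • x i j‖| :=
        expect_sign_comp_of_injective (e := fun j => (i, j)) (Prod.mk_right_injective i)
          fun ε => |‖∑ j, ε j • x i j‖ - 𝔼 η : Fin m → ℤˣ, ‖∑ j, η j • x i j‖|
    _ ≤ √(∑ j, ‖x i j‖ ^ 2) := expect_abs_norm_sum_sub_expect_le (x i)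
    _ ≤ √m := by
        gcongr
        simpa using sum_le_card_nsmul univ _ 1
          fun j _ => pow_le_one₀ (n := 2) (norm_nonneg _) (hx i j)

variable [NormedSpace ℝ X]

lemma rademacherAvg_smul {n : ℕ} {c : ℝ} (hc : 0 ≤ c) (x : Fin n → X) :
    rademacherAvg n (c • x) = c * rademacherAvg n x := by
  simp only [rademacherAvg_eq_expect, Pi.smul_apply, smul_comm _ c, ← smul_sum, norm_smul,
    Real.norm_of_nonneg hc, mul_expect]

lemma rademacherAvg_le_betaN_mul {n : ℕ} {x : Fin n → X} {M : ℝ} (hM : 0 ≤ M)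
    (hx : ∀ i, ‖x i‖ ≤ M) : rademacherAvg n x ≤ betaN X n * M := by
  obtain rfl | hM := hM.eq_or_lt
  · simpa [fun i => norm_le_zero_iff.1 (hx i)] using rademacherAvg_le_sum_norm x
  have := rademacherAvg_le_betaN (x := M⁻¹ • x) fun i => by
    rw [Pi.smul_apply, norm_smul, norm_inv, Real.norm_of_nonneg hM.le, inv_mul_le_iff₀ hM, mul_one]
    exact hx i
  rwa [rademacherAvg_smul (inv_nonneg.2 hM.le), inv_mul_le_iff₀ hM, mul_comm] at this

lemma expect_norm_sum_le_betaN_mul {ι : Type*} [Fintype ι] [DecidableEq ι] (s : Finset ι)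
    {x : ι → X} {M : ℝ} (hM : 0 ≤ M) (hx : ∀ i ∈ s, ‖x i‖ ≤ M) :
    𝔼 ε : ι → ℤˣ, ‖∑ i ∈ s, ε i • x i‖ ≤ betaN X #s * M := by
  let e : Fin #s → ι := fun j => s.equivFin.symm j
  have he : e.Injective := Subtype.val_injective.comp s.equivFin.symm.injective
  calc 𝔼 ε : ι → ℤˣ, ‖∑ i ∈ s, ε i • x i‖
      = 𝔼 ε : ι → ℤˣ, ‖∑ j, (ε ∘ e) j • x (e j)‖ := by
        refine expect_congr rfl fun ε _ => congr_arg norm ?_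
        rw [← sum_coe_sort]
        exact (s.equivFin.symm.sum_comp fun i => ε i • x i).symm
    _ = rademacherAvg #s (x ∘ e) := by
        rw [expect_sign_comp_of_injective he fun ε => ‖∑ j, ε j • x (e j)‖,
          rademacherAvg_eq_expect]; rfl
    _ ≤ betaN X #s * M :=
        rademacherAvg_le_betaN_mul hM fun j => hx _ (s.equivFin.symm j).2

-- Conditionally on the signs within the rows, the row sums are `n` vectors of norm at most
-- `betaN X m` up to deviations, each of which is at most `√m` on average.
lemma betaN_mul_le (n m : ℕ) : betaN X (n * m) ≤ betaN X n * (betaN X m + n * √m) := by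
  refine betaN_le fun z hz => ?_
  let x (i : Fin n) (j : Fin m) : X := z (finProdFinEquiv (i, j))
  have hx (i : Fin n) (j : Fin m) : ‖x i j‖ ≤ 1 := hz _
  let dev (ε : Fin n × Fin m → ℤˣ) (i : Fin n) : ℝ :=
    |‖∑ j, ε (i, j) • x i j‖ - rademacherAvg m (x i)|
  have row_le (ε : Fin n × Fin m → ℤˣ) (i : Fin n) :
      ‖∑ j, ε (i, j) • x i j‖ ≤ betaN X m + ∑ i, dev ε i := by
    have mean : rademacherAvg m (x i) ≤ betaN X m := rademacherAvg_le_betaN (hx i)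
    have single : dev ε i ≤ ∑ i, dev ε i :=
      single_le_sum (fun k _ => abs_nonneg _) (mem_univ i)
    linarith [le_abs_self (‖∑ j, ε (i, j) • x i j‖ - rademacherAvg m (x i))]
  calc rademacherAvg (n * m) z
      = 𝔼 ε : Fin n × Fin m → ℤˣ, 𝔼 δ : Fin n → ℤˣ, ‖∑ i, δ i • ∑ j, ε (i, j) • x i j‖ := by
        rw [← expect_norm_sum_sum_eq, rademacherAvg_eq_expect,
          ← expect_sign_comp_of_injective finProdFinEquiv.symm.injective]
        refine expect_congr rfl fun ε _ => congr_arg norm ?_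
        rw [← finProdFinEquiv.sum_comp]
        simp [x]
    _ ≤ 𝔼 ε : Fin n × Fin m → ℤˣ, betaN X n * (betaN X m + ∑ i, dev ε i) := by
        refine expect_le_expect fun ε _ => ?_
        rw [← rademacherAvg_eq_expect fun i => ∑ j, ε (i, j) • x i j]
        exact rademacherAvg_le_betaN_mul
          (add_nonneg (betaN_nonneg X m) (sum_nonneg fun i _ => abs_nonneg _)) (row_le ε)
    _ = betaN X n * (betaN X m + ∑ i, 𝔼 ε : Fin n × Fin m → ℤˣ, dev ε i) := by
        simp only [← mul_expect, expect_add_distrib, Fintype.expect_const, expect_sum_comm]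
    _ ≤ betaN X n * (betaN X m + n * √m) := by
        have := betaN_nonneg X n
        gcongr
        simpa using sum_le_card_nsmul univ _ _ fun i _ => expect_abs_norm_row_sub_expect_le hx i

end BetaN

section Growth

variable {X : Type*} [NormedAddCommGroup X] [NormedSpace ℝ X]

lemma betaN_pow_le {n : ℕ} {ρ : ℝ} (hρ : 0 < ρ) (h : betaN X n ≤ ρ) (k : ℕ) :
    betaN X (n ^ k) ≤ ρ ^ k * (1 + n * ∑ j ∈ range k, (√n / ρ) ^ j) := by
  induction k with
  | zero => simpa using betaN_le_natCast X 1
  | succ k ih =>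
    have sqrt_pow : √((n ^ k : ℕ) : ℝ) = √n ^ k := by
      rw [Nat.cast_pow, Real.sqrt_eq_iff_eq_sq (by positivity) (by positivity), pow_right_comm,
        Real.sq_sqrt (by positivity)]
    calc betaN X (n ^ (k + 1))
        ≤ betaN X n * (betaN X (n ^ k) + n * √n ^ k) := by
          rw [pow_succ', ← sqrt_pow]
          exact betaN_mul_le n (n ^ k)
      _ ≤ ρ * (ρ ^ k * (1 + n * ∑ j ∈ range k, (√n / ρ) ^ j) + n * √n ^ k) := by
          have := betaN_nonneg X (n ^ k)
          gcongr
      _ = ρ ^ (k + 1) * (1 + n * ∑ j ∈ range (k + 1), (√n / ρ) ^ j) := by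
          have cancel : ρ ^ k * (√n / ρ) ^ k = √n ^ k := by
            rw [← mul_pow, mul_div_cancel₀ _ hρ.ne']
          rw [sum_range_succ, ← cancel]
          ring

lemma exists_betaN_pow_le {n : ℕ} {ρ : ℝ} (hn : n ≠ 0) (hρ : √n < ρ) (h : betaN X n ≤ ρ) :
    ∃ D, 0 ≤ D ∧ ∀ k, betaN X (n ^ k) ≤ D * ρ ^ k := by
  have hσ : 0 < √(n : ℝ) := by positivity
  have hρ₀ : 0 < ρ := hσ.trans hρ
  have ratio_lt : √n / ρ < 1 := (div_lt_one hρ₀).2 hρ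
  refine ⟨1 + n * (1 - √n / ρ)⁻¹, ?_, fun k => (betaN_pow_le hρ₀ h k).trans ?_⟩
  · have : 0 < 1 - √n / ρ := sub_pos.2 ratio_lt
    positivity
  · rw [mul_comm]
    gcongr
    exact sum_le_hasSum _ (fun j _ => by positivity)
      (hasSum_geometric_of_lt_one (by positivity) ratio_lt)

lemma exists_betaN_le_rpow {n : ℕ} {s : ℝ} (hn : 2 ≤ n) (hs : 1 / 2 < s)
    (h : betaN X n ≤ (n : ℝ) ^ s) : ∃ D, 0 ≤ D ∧ ∀ N : ℕ, betaN X N ≤ D * (N : ℝ) ^ s := by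
  have sqrt_lt : √n < (n : ℝ) ^ s := by
    rw [Real.sqrt_eq_rpow]
    exact Real.rpow_lt_rpow_of_exponent_lt (by exact_mod_cast hn) hs
  obtain ⟨D, hD, hpow⟩ := exists_betaN_pow_le (by lia) sqrt_lt h
  refine ⟨D * (n : ℝ) ^ s, by positivity, fun N => ?_⟩
  obtain rfl | hN := eq_or_ne N 0
  · refine (betaN_le_natCast X 0).trans ?_
    rw [Nat.cast_zero]
    positivity
  calc betaN X N
      ≤ betaN X (n ^ (Nat.log n N + 1)) :=
        betaN_mono X (Nat.lt_pow_succ_log_self (by lia) N).le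
    _ ≤ D * ((n : ℝ) ^ s) ^ (Nat.log n N + 1) := hpow _
    _ = D * (n : ℝ) ^ s * ((n ^ Nat.log n N : ℕ) : ℝ) ^ s := by
        rw [pow_succ', mul_assoc, Nat.cast_pow, Real.rpow_pow_comm (by positivity)]
    _ ≤ D * (n : ℝ) ^ s * (N : ℝ) ^ s := by
        gcongr
        exact Nat.pow_log_le_self n hN

end Growth

section HasType

lemma exists_dyadic_level {ι X : Type*} [NormedAddCommGroup X] {x : ι → X} (hx : ∀ i, ‖x i‖ ≤ 1) :
    ∃ level : ι → ℕ, ∀ i, x i ≠ 0 →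
      (1 / 2) ^ (level i + 1) ≤ ‖x i‖ ∧ ‖x i‖ ≤ (1 / 2) ^ level i := by
  have (i : ι) : ∃ j : ℕ, x i ≠ 0 → (1 / 2) ^ (j + 1) ≤ ‖x i‖ ∧ ‖x i‖ ≤ (1 / 2) ^ j := by
    by_cases hi : x i = 0
    · exact ⟨0, absurd hi⟩
    · obtain ⟨j, hlt, hle⟩ := exists_nat_pow_near_of_lt_one (norm_pos_iff.2 hi) (hx i)
        (y := (1 / 2 : ℝ)) (by norm_num) (by norm_num)
      exact ⟨j, fun _ => ⟨hlt.le, hle⟩⟩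
  choose level hlevel using this
  exact ⟨level, hlevel⟩

variable {ι X : Type*} [Fintype ι] [NormedAddCommGroup X]

lemma card_mul_rpow_le_one {x : ι → X} {q : ℝ} (hq : 0 ≤ q) (hx : ∑ i, ‖x i‖ ^ q ≤ 1) {a : ℝ}
    (ha : 0 ≤ a) {s : Finset ι} (hs : ∀ i ∈ s, a ≤ ‖x i‖) : #s * a ^ q ≤ 1 := by
  calc #s * a ^ q = ∑ _i ∈ s, a ^ q := by simp
    _ ≤ ∑ i ∈ s, ‖x i‖ ^ q := sum_le_sum fun i hi => Real.rpow_le_rpow ha (hs i hi) hq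
    _ ≤ ∑ i, ‖x i‖ ^ q :=
        sum_le_sum_of_subset_of_nonneg s.subset_univ fun i _ _ => by positivity
    _ ≤ 1 := hx

lemma norm_le_one_of_sum_rpow_le_one {x : ι → X} {q : ℝ} (hq : 0 < q)
    (hx : ∑ i, ‖x i‖ ^ q ≤ 1) (i : ι) : ‖x i‖ ≤ 1 := by
  have : ‖x i‖ ^ q ≤ 1 := by
    simpa using card_mul_rpow_le_one hq.le hx (norm_nonneg (x i)) (s := {i}) (by simp)
  exact (Real.rpow_le_rpow_iff (norm_nonneg _) zero_le_one hq).1 (by simpa using this)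

variable [NormedSpace ℝ X] [DecidableEq ι]

lemma expect_norm_sum_dyadic_le {q s D : ℝ} (hq : 0 ≤ q) (hs : 0 ≤ s) (hD : 0 ≤ D)
    (h : ∀ N : ℕ, betaN X N ≤ D * (N : ℝ) ^ s) {x : ι → X} (hx : ∑ i, ‖x i‖ ^ q ≤ 1) {j : ℕ}
    {t : Finset ι} (ht : ∀ i ∈ t, (1 / 2) ^ (j + 1) ≤ ‖x i‖ ∧ ‖x i‖ ≤ (1 / 2) ^ j) :
    𝔼 ε : ι → ℤˣ, ‖∑ i ∈ t, ε i • x i‖ ≤ D * 2 ^ (q * s) * (2 ^ (q * s - 1)) ^ j := by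
  have card_le : (#t : ℝ) ≤ 2 ^ (q * (j + 1)) := by
    have := card_mul_rpow_le_one hq hx (by positivity) fun i hi => (ht i hi).1
    rwa [← le_div_iff₀ (by positivity), one_div, ← Real.inv_rpow (by positivity), one_div, inv_pow,
      inv_inv, ← Real.rpow_natCast, ← Real.rpow_mul zero_le_two, Nat.cast_add_one, mul_comm] at this
  calc 𝔼 ε : ι → ℤˣ, ‖∑ i ∈ t, ε i • x i‖
      ≤ betaN X #t * (1 / 2) ^ j :=
        expect_norm_sum_le_betaN_mul t (by positivity) fun i hi => (ht i hi).2
    _ ≤ D * (2 ^ (q * (j + 1))) ^ s * (1 / 2) ^ j := by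
        gcongr
        exact (h #t).trans (by gcongr)
    _ = D * 2 ^ (q * s) * (2 ^ (q * s - 1)) ^ j := by
        rw [← Real.rpow_mul zero_le_two, show q * (j + 1) * s = q * s + q * s * j by ring,
          Real.rpow_add zero_lt_two, Real.rpow_mul_natCast zero_le_two,
          Real.rpow_sub_one two_ne_zero, div_pow, div_pow, one_pow]
        ring

lemma expect_norm_sum_le_of_sum_rpow_le_one {q s D : ℝ} (hq : 0 < q) (hs : 0 ≤ s)
    (hqs : q * s < 1) (hD : 0 ≤ D) (h : ∀ N : ℕ, betaN X N ≤ D * (N : ℝ) ^ s) {x : ι → X}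
    (hx : ∑ i, ‖x i‖ ^ q ≤ 1) :
    𝔼 ε : ι → ℤˣ, ‖∑ i, ε i • x i‖ ≤ D * 2 ^ (q * s) * (1 - 2 ^ (q * s - 1))⁻¹ := by
  classical
  obtain ⟨level, hlevel⟩ := exists_dyadic_level (norm_le_one_of_sum_rpow_le_one hq hx)
  let support : Finset ι := {i | x i ≠ 0}
  let layer (j : ℕ) : Finset ι := {i ∈ support | level i = j}
  have hlayer (j : ℕ) : ∀ i ∈ layer j, (1 / 2) ^ (j + 1) ≤ ‖x i‖ ∧ ‖x i‖ ≤ (1 / 2) ^ j := by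
    intro i hi
    obtain ⟨hsupp, rfl⟩ := mem_filter.1 hi
    exact hlevel i (mem_filter.1 hsupp).2
  let top : ℕ := univ.sup level + 1
  have sum_layers (ε : ι → ℤˣ) :
      ∑ i, ε i • x i = ∑ j ∈ range top, ∑ i ∈ layer j, ε i • x i := by
    rw [sum_fiberwise_of_maps_to fun i _ => mem_range.2 (Nat.lt_succ_of_le (le_sup (mem_univ i)))]
    exact (sum_filter_of_ne fun i _ hi => right_ne_zero_of_smul hi).symm
  calc 𝔼 ε : ι → ℤˣ, ‖∑ i, ε i • x i‖
      ≤ 𝔼 ε : ι → ℤˣ, ∑ j ∈ range top, ‖∑ i ∈ layer j, ε i • x i‖ :=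
        expect_le_expect fun ε _ => by rw [sum_layers]; exact norm_sum_le _ _
    _ = ∑ j ∈ range top, 𝔼 ε : ι → ℤˣ, ‖∑ i ∈ layer j, ε i • x i‖ := expect_sum_comm _ _ _
    _ ≤ ∑ j ∈ range top, D * 2 ^ (q * s) * (2 ^ (q * s - 1)) ^ j :=
        sum_le_sum fun j _ => expect_norm_sum_dyadic_le hq.le hs hD h hx (hlayer j)
    _ ≤ D * 2 ^ (q * s) * (1 - 2 ^ (q * s - 1))⁻¹ := by
        rw [← mul_sum]
        gcongr
        exact sum_le_hasSum _ (fun j _ => by positivity) (hasSum_geometric_of_lt_one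
          (by positivity) (Real.rpow_lt_one_of_one_lt_of_neg one_lt_two (by linarith)))

lemma hasTypeWith_of_rademacherAvg_le {q K : ℝ} (hq : 0 < q)
    (h : ∀ (n : ℕ) (x : Fin n → X), ∑ i, ‖x i‖ ^ q ≤ 1 → rademacherAvg n x ≤ K) :
    HasTypeWith X q K := by
  intro n x
  set σ := ∑ i, ‖x i‖ ^ q
  have hσ : 0 ≤ σ := by positivity
  obtain hσ₀ | hσ_pos := hσ.eq_or_lt
  · have vanish (i : Fin n) : ‖x i‖ = 0 := by
      have := (sum_eq_zero_iff_of_nonneg fun i _ => by positivity).1 hσ₀.symm i (mem_univ i)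
      exact ((Real.rpow_eq_zero_iff_of_nonneg (norm_nonneg _)).1 this).1
    rw [← hσ₀, Real.zero_rpow (by positivity), mul_zero]
    simpa [vanish] using rademacherAvg_le_sum_norm x
  · have hroot : 0 < σ ^ (1 / q) := by positivity
    have normalized : ∑ i, ‖((σ ^ (1 / q))⁻¹ • x) i‖ ^ q = 1 := by
      simp only [Pi.smul_apply, norm_smul, norm_inv, Real.norm_of_nonneg hroot.le,
        Real.mul_rpow (inv_nonneg.2 hroot.le) (norm_nonneg _), Real.inv_rpow hroot.le,
        ← Real.rpow_mul hσ, one_div_mul_cancel hq.ne', Real.rpow_one, ← mul_sum]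
      exact inv_mul_cancel₀ hσ_pos.ne'
    have := h n _ normalized.le
    rwa [rademacherAvg_smul (inv_nonneg.2 hroot.le), inv_mul_le_iff₀ hroot, mul_comm] at this

lemma exists_hasTypeWith_of_betaN_le_rpow {q s D : ℝ} (hq : 0 < q) (hs : 0 ≤ s) (hqs : q * s < 1)
    (hD : 0 ≤ D) (h : ∀ N : ℕ, betaN X N ≤ D * (N : ℝ) ^ s) : ∃ K, HasTypeWith X q K :=
  ⟨_, hasTypeWith_of_rademacherAvg_le hq fun _ x hx => by
    rw [rademacherAvg_eq_expect]
    exact expect_norm_sum_le_of_sum_rpow_le_one hq hs hqs hD h hx⟩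

end HasType

section LoewnerPosition

variable {E X : Type*} [NormedAddCommGroup E] [InnerProductSpace ℝ E]
  [NormedAddCommGroup X] [NormedSpace ℝ X]

/-- Löwner's position of an embedding `u`: among the ellipsoids `{v | ‖S v‖ ≤ 1}` containing
`{v | ‖u v‖ ≤ 1}`, the Euclidean unit ball has the smallest volume. The volume ratio of the unit
ball to `{v | ‖S v‖ ≤ 1}` is `|S.det|`. -/
structure IsLoewnerPosition (u : E →ₗ[ℝ] X) : Prop where
  norm_le (v : E) : ‖v‖ ≤ ‖u v‖
  abs_det_le_one (S : E →L[ℝ] E) : (∀ v, ‖S v‖ ≤ ‖u v‖) → |S.det| ≤ 1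

lemma norm_sq_add_smul_starProjection (K : Submodule ℝ E) [K.HasOrthogonalProjection]
    (t : ℝ) (v : E) :
    ‖v + t • K.starProjection v‖ ^ 2 = ‖v‖ ^ 2 + (2 * t + t ^ 2) * ‖K.starProjection v‖ ^ 2 := by
  have inner_eq : ⟪v, K.starProjection v⟫_ℝ = ‖K.starProjection v‖ ^ 2 := by
    rw [real_inner_comm]
    exact K.re_inner_starProjection_eq_normSq (𝕜 := ℝ) v
  rw [norm_add_sq_real, real_inner_smul_right, inner_eq, norm_smul, mul_pow, Real.norm_eq_abs,
    sq_abs]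
  ring

variable [FiniteDimensional ℝ E]

lemma isCompact_setOf_norm_le_norm (i : E →ₗ[ℝ] X) :
    IsCompact {S : E →L[ℝ] E | ∀ v, ‖S v‖ ≤ ‖i v‖} := by
  have : ProperSpace (E →L[ℝ] E) := FiniteDimensional.proper ℝ _
  refine Metric.isCompact_of_isClosed_isBounded ?_ ?_
  · simp only [Set.ofPred_forall]
    exact isClosed_iInter fun v => isClosed_le (by fun_prop) continuous_const
  · refine isBounded_iff_forall_norm_le.2 ⟨‖i.toContinuousLinearMap‖, fun S hS => ?_⟩
    exact S.opNorm_le_bound (norm_nonneg _) fun v =>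
      (hS v).trans (i.toContinuousLinearMap.le_opNorm v)

lemma exists_det_ne_zero_norm_le_norm {i : E →ₗ[ℝ] X} (hi : Function.Injective i) :
    ∃ S : E →L[ℝ] E, S.det ≠ 0 ∧ ∀ v, ‖S v‖ ≤ ‖i v‖ := by
  obtain ⟨c, hc, hlip⟩ := i.exists_antilipschitzWith (LinearMap.ker_eq_bot.2 hi)
  refine ⟨(c : ℝ)⁻¹ • ContinuousLinearMap.id ℝ E, ?_, fun v => ?_⟩
  · have : (((c : ℝ)⁻¹ • ContinuousLinearMap.id ℝ E : E →L[ℝ] E) : E →ₗ[ℝ] E) =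
      (c : ℝ)⁻¹ • LinearMap.id := rfl
    rw [ContinuousLinearMap.det, this, LinearMap.det_smul, LinearMap.det_id]
    positivity
  · simpa [norm_smul, inv_mul_le_iff₀ (NNReal.coe_pos.2 hc)] using hlip.le_mul_dist v 0

lemma exists_isLoewnerPosition {i : E →ₗ[ℝ] X} (hi : Function.Injective i) :
    ∃ e : E ≃ₗ[ℝ] E, IsLoewnerPosition (i ∘ₗ e.toLinearMap) := by
  obtain ⟨T, hT, hTi⟩ := exists_det_ne_zero_norm_le_norm hi
  obtain ⟨M, hMi, hMmax⟩ := (isCompact_setOf_norm_le_norm i).exists_isMaxOn ⟨T, hTi⟩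
    (ContinuousLinearMap.continuous_det (𝕜 := ℝ) (E := E)).abs.continuousOn
  have hM : 0 < |M.det| := (abs_pos.2 hT).trans_le (hMmax hTi)
  let e : E ≃ₗ[ℝ] E := LinearMap.equivOfDetNeZero (M : E →ₗ[ℝ] E) (abs_pos.1 hM)
  have he (v : E) : M (e.symm v) = v := e.apply_symm_apply v
  have he' (v : E) : e.symm (M v) = v := e.symm_apply_apply v
  refine ⟨e.symm, fun v => ?_, fun S hS => ?_⟩
  · simpa [he] using hMi (e.symm v)
  · have hSM : |(S ∘L M).det| ≤ |M.det| := hMmax fun v => by simpa [he'] using hS (M v)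
    rw [ContinuousLinearMap.det, ContinuousLinearMap.toLinearMap_comp, LinearMap.det_comp,
      abs_mul] at hSM
    exact le_of_mul_le_mul_right (hSM.trans_eq (one_mul _).symm) hM

lemma det_one_add_smul_starProjection (K : Submodule ℝ E) (s : ℝ) :
    (1 + s • K.starProjection : E →L[ℝ] E).det = (1 + s) ^ finrank ℝ K := by
  let T : E →ₗ[ℝ] E := (1 + s • K.starProjection : E →L[ℝ] E).toLinearMap
  have hT (v : E) : T v = v + s • K.starProjection v := rfl
  have hK : K ≤ K.comap T := fun v hv =>
    K.add_mem hv (K.smul_mem s (K.starProjection_apply_mem v))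
  have on_K : T.restrict hK = (1 + s) • LinearMap.id := by
    ext ⟨v, hv⟩
    simp [hT, Submodule.starProjection_eq_self_iff.2 hv, add_smul]
  have on_quotient : K.mapQ K T hK = LinearMap.id := by
    ext v
    simp [hT, (Submodule.Quotient.mk_eq_zero K).2 (K.smul_mem s (K.starProjection_apply_mem v))]
  calc T.det = (T.restrict hK).det * (K.mapQ K T hK).det := T.det_eq_det_mul_det K hK
    _ = (1 + s) ^ finrank ℝ K := by simp [on_K, on_quotient]

variable {u : E →ₗ[ℝ] X} {K : Submodule ℝ E} {ρ : ℝ}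

lemma IsLoewnerPosition.abs_det_le_pow (hu : IsLoewnerPosition u) {S : E →L[ℝ] E} {c : ℝ}
    (hc : 0 < c) (hS : ∀ v, ‖S v‖ ≤ c * ‖u v‖) : |S.det| ≤ c ^ finrank ℝ E := by
  have := hu.abs_det_le_one (c⁻¹ • S) fun v => by
    simpa [norm_smul, abs_of_pos hc, inv_mul_le_iff₀ hc] using hS v
  have det_smul : (c⁻¹ • S).det = c⁻¹ ^ finrank ℝ E * S.det := LinearMap.det_smul _ _
  rwa [det_smul, abs_mul, abs_of_pos (by positivity), inv_pow, inv_mul_le_iff₀ (by positivity),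
    mul_one] at this

-- Test the extremality of the unit ball on the stretching by `1 + t` along `K`, rescaled so that it
-- stays below `‖u ·‖`.
lemma IsLoewnerPosition.one_add_pow_le (hu : IsLoewnerPosition u) (hρ : 0 ≤ ρ)
    (hK : ∀ v, ‖K.starProjection v‖ ^ 2 ≤ ρ * ‖u v‖ ^ 2) {t : ℝ} (ht : 0 ≤ t) :
    ((1 + t) ^ finrank ℝ K) ^ 2 ≤ (1 + (2 * t + t ^ 2) * ρ) ^ finrank ℝ E := by
  have hc : 0 < 1 + (2 * t + t ^ 2) * ρ := by positivity
  have := hu.abs_det_le_pow (S := 1 + t • K.starProjection) (Real.sqrt_pos.2 hc) fun v => by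
    refine le_of_sq_le_sq ?_ (by positivity)
    have norm_sq_le : ‖v‖ ^ 2 ≤ ‖u v‖ ^ 2 := by gcongr; exact hu.norm_le v
    calc ‖v + t • K.starProjection v‖ ^ 2
        = ‖v‖ ^ 2 + (2 * t + t ^ 2) * ‖K.starProjection v‖ ^ 2 :=
          norm_sq_add_smul_starProjection K t v
      _ ≤ ‖u v‖ ^ 2 + (2 * t + t ^ 2) * (ρ * ‖u v‖ ^ 2) := by gcongr; exact hK v
      _ = (√(1 + (2 * t + t ^ 2) * ρ) * ‖u v‖) ^ 2 := by
          rw [mul_pow, Real.sq_sqrt hc.le]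
          ring
  rw [det_one_add_smul_starProjection, abs_of_pos (by positivity)] at this
  calc ((1 + t) ^ finrank ℝ K) ^ 2
      ≤ (√(1 + (2 * t + t ^ 2) * ρ) ^ finrank ℝ E) ^ 2 := by gcongr
    _ = (1 + (2 * t + t ^ 2) * ρ) ^ finrank ℝ E := by rw [pow_right_comm, Real.sq_sqrt hc.le]

-- Compare the logarithms of the two sides of `one_add_pow_le` to first order at `t = 0`.
lemma IsLoewnerPosition.finrank_le (hu : IsLoewnerPosition u) (hρ : 0 ≤ ρ)
    (hK : ∀ v, ‖K.starProjection v‖ ^ 2 ≤ ρ * ‖u v‖ ^ 2) : finrank ℝ K ≤ ρ * finrank ℝ E := by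
  have approx (t : ℝ) (ht : 0 < t) :
      (finrank ℝ K : ℝ) ≤ (1 + t) * (1 + t / 2) * (ρ * finrank ℝ E) := by
    have log_le := Real.log_le_log (by positivity) (hu.one_add_pow_le hρ hK ht.le)
    simp only [Real.log_pow, Nat.cast_ofNat] at log_le
    have lower : t / (1 + t) ≤ Real.log (1 + t) := by
      refine le_of_eq_of_le ?_ (Real.one_sub_inv_le_log_of_pos (by positivity))
      field_simp
      ring
    have upper : Real.log (1 + (2 * t + t ^ 2) * ρ) ≤ (2 * t + t ^ 2) * ρ := by
      refine (Real.log_le_sub_one_of_pos (by positivity)).trans_eq ?_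
      ring
    have : 2 * (finrank ℝ K * (t / (1 + t))) ≤ finrank ℝ E * ((2 * t + t ^ 2) * ρ) :=
      calc 2 * (finrank ℝ K * (t / (1 + t))) ≤ 2 * (finrank ℝ K * Real.log (1 + t)) := by gcongr
        _ ≤ finrank ℝ E * Real.log (1 + (2 * t + t ^ 2) * ρ) := log_le
        _ ≤ finrank ℝ E * ((2 * t + t ^ 2) * ρ) := by gcongr
    field_simp at this ⊢
    linarith
  have limit : Filter.Tendsto (fun t : ℝ => (1 + t) * (1 + t / 2) * (ρ * finrank ℝ E))
      (nhdsWithin 0 (Set.Ioi 0)) (nhds (ρ * finrank ℝ E)) := by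
    refine tendsto_nhdsWithin_of_tendsto_nhds (Continuous.tendsto' ?_ 0 _ ?_)
    · fun_prop
    · simp
  exact ge_of_tendsto limit (eventually_mem_nhdsWithin.mono approx)

lemma IsLoewnerPosition.exists_norm_eq_one_lt_norm_sq_starProjection (hu : IsLoewnerPosition u)
    (hρ : 0 ≤ ρ) (hK : ρ * finrank ℝ E < finrank ℝ K) :
    ∃ v, ‖u v‖ = 1 ∧ ρ < ‖K.starProjection v‖ ^ 2 := by
  by_contra! hv
  refine hK.not_ge (hu.finrank_le hρ fun v => ?_)
  obtain hv₀ | hv₀ := (norm_nonneg (u v)).eq_or_lt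
  · have : v = 0 := norm_le_zero_iff.1 ((hu.norm_le v).trans hv₀.ge)
    simp [this]
  · have := hv (‖u v‖⁻¹ • v) (by simp [norm_smul, hv₀.ne'])
    rwa [map_smul, norm_smul, norm_inv, norm_norm, mul_pow, inv_pow,
      inv_mul_le_iff₀ (by positivity), mul_comm] at this

end LoewnerPosition

section DvoretzkyRogers

variable {E X : Type*} [NormedAddCommGroup E] [InnerProductSpace ℝ E]

lemma abs_inner_le_of_lt_norm_sq_starProjection_orthogonal {W : Submodule ℝ E}
    [W.HasOrthogonalProjection] {η : ℝ} (hη : 0 ≤ η) {v w : E} (hv : v ∈ W) (hv₁ : ‖v‖ ≤ 1)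
    (hw₁ : ‖w‖ ≤ 1) (hw : 1 - η ^ 2 < ‖Wᗮ.starProjection w‖ ^ 2) : |⟪v, w⟫_ℝ| ≤ η := by
  have pythagoras := W.norm_sq_eq_add_norm_sq_starProjection w
  have hw_sq : ‖w‖ ^ 2 ≤ 1 := pow_le_one₀ (norm_nonneg w) hw₁
  have norm_proj : ‖W.starProjection w‖ ≤ η :=
    le_of_sq_le_sq (by linarith) hη
  calc |⟪v, w⟫_ℝ| = |⟪v, W.starProjection w⟫_ℝ| := by
        rw [← W.inner_starProjection_left_eq_right, Submodule.starProjection_eq_self_iff.2 hv]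
    _ ≤ ‖v‖ * ‖W.starProjection w‖ := abs_real_inner_le_norm _ _
    _ ≤ 1 * η := by gcongr
    _ = η := one_mul η

section

variable [FiniteDimensional ℝ E] [NormedAddCommGroup X] [NormedSpace ℝ X] {u : E →ₗ[ℝ] X} {η : ℝ}

lemma IsLoewnerPosition.exists_almost_orthogonal_to (hu : IsLoewnerPosition u) (hη₀ : 0 ≤ η)
    (hη₁ : η ≤ 1) {n : ℕ} (hn : n < η ^ 2 * finrank ℝ E) {v : Fin n → E}
    (hv : ∀ i, ‖u (v i)‖ = 1) :
    ∃ w, ‖u w‖ = 1 ∧ 1 - η ≤ ‖w‖ ^ 2 ∧ ∀ i, |⟪v i, w⟫_ℝ| ≤ η := by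
  let W := Submodule.span ℝ (Set.range v)
  have finrank_W : (finrank ℝ W : ℝ) ≤ n := by
    exact_mod_cast (finrank_range_le_card v).trans_eq (Fintype.card_fin n)
  have finrank_add : (finrank ℝ W + finrank ℝ Wᗮ : ℝ) = finrank ℝ E := by
    exact_mod_cast W.finrank_add_finrank_orthogonal
  obtain ⟨w, huw, hw⟩ := hu.exists_norm_eq_one_lt_norm_sq_starProjection (K := Wᗮ)
    (sub_nonneg.2 (pow_le_one₀ hη₀ hη₁)) (ρ := 1 - η ^ 2) (by linarith)
  refine ⟨w, huw, ?_, fun i => ?_⟩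
  · have norm_proj_le : ‖Wᗮ.starProjection w‖ ^ 2 ≤ ‖w‖ ^ 2 := by
      gcongr
      exact Wᗮ.norm_starProjection_apply_le w
    have η_sq_le : η ^ 2 ≤ η := pow_le_of_le_one hη₀ hη₁ two_ne_zero
    linarith
  · exact abs_inner_le_of_lt_norm_sq_starProjection_orthogonal hη₀
      (Submodule.subset_span (Set.mem_range_self i)) ((hu.norm_le _).trans_eq (hv i))
      ((hu.norm_le w).trans_eq huw) hw

lemma IsLoewnerPosition.exists_almost_orthonormal (hu : IsLoewnerPosition u) (hη₀ : 0 ≤ η)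
    (hη₁ : η ≤ 1) {n : ℕ} (hn : n ≤ η ^ 2 * finrank ℝ E) :
    ∃ v : Fin n → E, (∀ i, ‖u (v i)‖ = 1) ∧ (∀ i, 1 - η ≤ ‖v i‖ ^ 2) ∧
      Pairwise fun i j => |⟪v i, v j⟫_ℝ| ≤ η := by
  induction n with
  | zero => exact ⟨0, by simp, by simp, Subsingleton.pairwise⟩
  | succ n ih =>
    rw [Nat.cast_succ] at hn
    obtain ⟨v, huv, hv, horth⟩ := ih (by linarith)
    obtain ⟨w, huw, hw, hvw⟩ := hu.exists_almost_orthogonal_to hη₀ hη₁ (by linarith) huv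
    refine ⟨Fin.snoc v w, Fin.lastCases (by simpa using huw) (by simpa using huv),
      Fin.lastCases (by simpa using hw) (by simpa using hv), fun i j hij => ?_⟩
    induction i using Fin.lastCases <;> induction j using Fin.lastCases
    · exact absurd rfl hij
    · simpa [real_inner_comm] using hvw _
    · simpa using hvw _
    · simpa using horth (by simpa using hij)

end

lemma card_sub_le_norm_sum_sq {ι : Type*} [Fintype ι] {w : ι → E} {η : ℝ}
    (hw : ∀ i, 1 - η ≤ ‖w i‖ ^ 2) (horth : Pairwise fun i j => |⟪w i, w j⟫_ℝ| ≤ η) :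
    Fintype.card ι - Fintype.card ι ^ 2 * η ≤ ‖∑ i, w i‖ ^ 2 := by
  classical
  have entry (i j : ι) : (if i = j then 1 else 0) - η ≤ ⟪w i, w j⟫_ℝ := by
    split_ifs with hij
    · subst hij
      simpa using hw i
    · simpa using (abs_le.1 (horth hij)).1
  calc Fintype.card ι - Fintype.card ι ^ 2 * η
      = ∑ i : ι, ∑ j : ι, ((if i = j then 1 else 0) - η) := by
        simp [sum_sub_distrib, sq, mul_assoc]
    _ ≤ ∑ i, ∑ j, ⟪w i, w j⟫_ℝ := sum_le_sum fun i _ => sum_le_sum fun j _ => entry i j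
    _ = ‖∑ i, w i‖ ^ 2 := by
        rw [← real_inner_self_eq_norm_sq, sum_inner]
        simp only [inner_sum]

lemma abs_inner_units_smul (a b : ℤˣ) (v w : E) : |⟪a • v, b • w⟫_ℝ| = |⟪v, w⟫_ℝ| := by
  rcases Int.units_eq_one_or a with rfl | rfl <;> rcases Int.units_eq_one_or b with rfl | rfl <;>
    simp

variable [NormedAddCommGroup X] [NormedSpace ℝ X]

lemma exists_injective_linearMap_of_not_finiteDimensional (hinf : ¬ FiniteDimensional ℝ X)
    (N : ℕ) : ∃ i : EuclideanSpace ℝ (Fin N) →ₗ[ℝ] X, Function.Injective i := by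
  have aleph0_le : Cardinal.aleph0 ≤ Module.rank ℝ X :=
    not_lt.1 fun h => hinf (rank_lt_aleph0_iff.1 h)
  obtain ⟨i, hi⟩ :=
    le_rank_iff_exists_linearMap.1 ((Cardinal.natCast_le_aleph0 (n := N)).trans aleph0_le)
  exact ⟨i ∘ₗ (WithLp.linearEquiv 2 ℝ (Fin N → ℝ)).toLinearMap,
    hi.comp (WithLp.linearEquiv 2 ℝ (Fin N → ℝ)).injective⟩

lemma sub_le_betaN_sq_of_not_finiteDimensional (hinf : ¬ FiniteDimensional ℝ X) (n : ℕ) {η : ℝ}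
    (hη₀ : 0 < η) (hη₁ : η ≤ 1) : n - n ^ 2 * η ≤ betaN X n ^ 2 := by
  obtain ⟨N, hN⟩ := exists_nat_ge (n / η ^ 2)
  obtain ⟨i, hi⟩ := exists_injective_linearMap_of_not_finiteDimensional hinf N
  obtain ⟨e, hu⟩ := exists_isLoewnerPosition hi
  set u := i ∘ₗ e.toLinearMap
  obtain ⟨v, huv, hv, horth⟩ := hu.exists_almost_orthonormal hη₀.le hη₁ (n := n) <| by
    rwa [finrank_euclideanSpace_fin, ← div_le_iff₀' (by positivity)]
  have lower (ε : Fin n → ℤˣ) : √(n - n ^ 2 * η) ≤ ‖∑ i, ε i • u (v i)‖ := by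
    have := card_sub_le_norm_sum_sq (w := fun i => ε i • v i) (η := η)
      (by simpa [norm_units_zsmul] using hv)
      (by simpa only [abs_inner_units_smul] using horth)
    rw [Fintype.card_fin] at this
    calc √(n - n ^ 2 * η) ≤ ‖∑ i, ε i • v i‖ := Real.sqrt_le_iff.2 ⟨norm_nonneg _, this⟩
      _ ≤ ‖u (∑ i, ε i • v i)‖ := hu.norm_le _
      _ = ‖∑ i, ε i • u (v i)‖ := by simp only [map_sum, Units.smul_def, map_zsmul]
  refine (Real.sqrt_le_left (betaN_nonneg X n)).1 ?_
  calc √(n - n ^ 2 * η) ≤ 𝔼 ε : Fin n → ℤˣ, ‖∑ i, ε i • u (v i)‖ :=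
        le_expect univ_nonempty fun ε _ => lower ε
    _ = rademacherAvg n (u ∘ v) := (rademacherAvg_eq_expect _).symm
    _ ≤ betaN X n := rademacherAvg_le_betaN fun i => (huv i).le

lemma sqrt_le_betaN_of_not_finiteDimensional (hinf : ¬ FiniteDimensional ℝ X) (n : ℕ) :
    √n ≤ betaN X n := by
  refine Real.sqrt_le_iff.2 ⟨betaN_nonneg X n, ?_⟩
  have limit : Filter.Tendsto (fun η : ℝ => n - n ^ 2 * η) (nhdsWithin 0 (Set.Ioi 0))
      (nhds (n : ℝ)) :=
    tendsto_nhdsWithin_of_tendsto_nhds (Continuous.tendsto' (by fun_prop) 0 _ (by simp))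
  refine le_of_tendsto limit ?_
  filter_upwards [Ioc_mem_nhdsGT one_pos] with η ⟨hη₀, hη₁⟩
  exact sub_le_betaN_sq_of_not_finiteDimensional hinf n hη₀ hη₁

end DvoretzkyRogers

section NoBetterType

variable {X : Type*} [NormedAddCommGroup X]

lemma exists_betaN_le_rpow_of_betaN_lt_rpow {n : ℕ} {p : ℝ} (hn : 2 ≤ n) (hp₀ : 0 < p)
    (hp₂ : p < 2) (h : betaN X n < (n : ℝ) ^ (1 / p)) :
    ∃ r, p < r ∧ r < 2 ∧ betaN X n ≤ (n : ℝ) ^ (1 / r) := by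
  have cont : ContinuousAt (fun r : ℝ => (n : ℝ) ^ (1 / r)) p :=
    ContinuousAt.rpow continuousAt_const (by fun_prop (disch := positivity)) (by left; positivity)
  have right_of_p : ∀ᶠ r in nhdsWithin p (Set.Ioi p), betaN X n < (n : ℝ) ^ (1 / r) :=
    nhdsWithin_le_nhds (cont.eventually_const_lt h)
  obtain ⟨r, hr, hpr, hr₂⟩ := (right_of_p.and (Ioo_mem_nhdsGT hp₂)).exists
  exact ⟨r, hpr, hr₂, hr.le⟩

theorem rpow_le_betaN_of_no_better_type [NormedSpace ℝ X] (hinf : ¬ FiniteDimensional ℝ X)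
    {p : ℝ} (hp₀ : 0 < p) (hp₂ : p ≤ 2)
    (hmax : ∀ q, p < q → q ≤ 2 → ¬ ∃ K, HasTypeWith X q K) {n : ℕ} (hn : 1 ≤ n) :
    (n : ℝ) ^ (1 / p) ≤ betaN X n := by
  have sqrt_le := sqrt_le_betaN_of_not_finiteDimensional hinf n
  obtain rfl | hn := hn.eq_or_lt
  · simpa using sqrt_le
  obtain rfl | hp₂ := hp₂.eq_or_lt
  · rwa [← Real.sqrt_eq_rpow]
  by_contra! hlt
  obtain ⟨r, hpr, hr₂, hr⟩ := exists_betaN_le_rpow_of_betaN_lt_rpow hn hp₀ hp₂ hlt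
  have hr₀ : 0 < r := hp₀.trans hpr
  obtain ⟨D, hD, hβ⟩ := exists_betaN_le_rpow hn (one_div_lt_one_div_of_lt hr₀ hr₂) hr
  obtain ⟨q, hpq, hqr⟩ := exists_between hpr
  have hqr' : q * (1 / r) < 1 := by rwa [mul_one_div, div_lt_one hr₀]
  exact hmax q hpq (hqr.trans hr₂).le
    (exists_hasTypeWith_of_betaN_le_rpow (hp₀.trans hpq) (by positivity) hqr' hD hβ)

theorem betaN_lower_bound_of_no_better_type_general {𝕜 : Type*} [RCLike 𝕜] [NormedSpace 𝕜 X]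
    (hinf : ¬ FiniteDimensional 𝕜 X) {p : ℝ} (hp : p ∈ Set.Icc (1 : ℝ) 2)
    (hmax : ∀ q, p < q → q ≤ 2 → ¬ ∃ K, HasTypeWith X q K) {n : ℕ} (hn : 1 ≤ n) {δ : ℝ}
    (hδ : 0 < δ) :
    (∃ x : Fin n → X, (∀ i, ‖x i‖ ≤ 1) ∧ (n : ℝ) ^ (1 / p) / (1 + δ) ≤ rademacherAvg n x) ∧
      (n : ℝ) ^ (1 / p) ≤ betaN X n := by
  let _ : NormedSpace ℝ X := NormedSpace.restrictScalars ℝ 𝕜 X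
  have : IsScalarTower ℝ 𝕜 X := .of_algebraMap_smul fun _ _ => rfl
  have hinfℝ : ¬ FiniteDimensional ℝ X :=
    fun _ => hinf (Module.Finite.of_restrictScalars_finite ℝ 𝕜 X)
  have hβ := rpow_le_betaN_of_no_better_type hinfℝ (one_pos.trans_le hp.1) hp.2 hmax hn
  have shrink : (n : ℝ) ^ (1 / p) / (1 + δ) < (n : ℝ) ^ (1 / p) :=
    div_lt_self (by positivity) (by linarith)
  obtain ⟨x, hx, hlt⟩ := exists_lt_rademacherAvg_of_lt_betaN (shrink.trans_le hβ)
  exact ⟨⟨x, hx, hlt.le⟩, hβ⟩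

end NoBetterType

/-- **Lower-bound half of Lemma 2.7 of the paper (via Maurey–Pisier).**
If `X` is an infinite-dimensional Banach space, `p ∈ [1,2]`, and `X` has no type `q`
for any `p < q ≤ 2`, then for every `n ≥ 1` and `δ > 0` there are vectors
`x₁, …, xₙ` in the closed unit ball with `𝔼 ‖∑ εᵢ xᵢ‖ ≥ n^{1/p}/(1+δ)`;
consequently `β_n(X) ≥ n^{1/p}`. -/
theorem betaN_lower_bound_of_no_better_type {𝕜 X : Type*} [RCLike 𝕜]
    [NormedAddCommGroup X] [NormedSpace 𝕜 X] [CompleteSpace X]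
    (hinf : ¬ FiniteDimensional 𝕜 X)
    (p : ℝ) (hp : p ∈ Set.Icc (1 : ℝ) 2)
    (hmax : ∀ q : ℝ, p < q → q ≤ 2 → ¬ ∃ K' : ℝ, HasTypeWith X q K')
    (n : ℕ) (hn : 1 ≤ n) (δ : ℝ) (hδ : 0 < δ) :
    (∃ x : Fin n → X, (∀ i, ‖x i‖ ≤ 1) ∧
      (n : ℝ) ^ (1 / p) / (1 + δ) ≤ rademacherAvg n x) ∧
    (n : ℝ) ^ (1 / p) ≤ betaN X n :=
  betaN_lower_bound_of_no_better_type_general hinf hp hmax hn hδ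
end
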